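/- (Vázsonyi's conjecture, theorem of Grünbaum, Heppes, and Straszewicz, as stated in the paper.) Let X ⊂ ℝ³ be a finite set of m points with diameter 1. Then the number of unordered pairs {x,y} ⊆ X with dist(x,y) = 1 is at most 2m − 2. -/

import Mathlib

def wS {ι : Type*} (lam : ι → ι → ℤ) : List ι → ℤ
  | [] => 0
  | [_] => 0
  | a :: b :: l => lam a b + wS lam (b :: l)

lemma wS_cons_filter {ι : Type*} (lam : ι → ι → ℤ) (h1 : ∀ a b, |lam a b| ≤ 1)
    (h2 : ∀ a x y, |lam a x + lam x y - lam a y| ≤ 2) (p : ι → Bool) (l : List ι) :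
    ∀ a, |wS lam (a :: l) - wS lam (a :: l.filter p)| ≤ 2 * ((l.filter (fun x => !p x)).length : ℤ) := by
  induction l with
  | nil => intro a; simp
  | cons x l ih =>
    intro a
    by_cases hx : p x = true
    · have e : (x :: l).filter p = x :: l.filter p := by simp [hx]
      have e2 : (x :: l).filter (fun x => !p x) = l.filter (fun x => !p x) := by simp [hx]
      rw [e, e2]
      have := ih x
      simpa [wS] using this
    · have hx' : p x = false := by simpa using hx
      have e1 : (x :: l).filter p = l.filter p := by simp [hx']
      have e2 : (x :: l).filter (fun x => !p x) = x :: l.filter (fun x => !p x) := by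
        simp [hx']
      rw [e1, e2]
      have h3 : |wS lam (a :: x :: l) - wS lam (a :: l)| ≤ 2 := by
        cases l with
        | nil => simp only [wS]; have := h1 a x; simp only [abs_le] at *; omega
        | cons y l => simp only [wS]; have := h2 a x y; simp only [abs_le] at *; omega
      have h4 := ih a
      simp only [List.length_cons, abs_le] at *
      push_cast
      omega

lemma wS_filter {ι : Type*} (lam : ι → ι → ℤ) (h1 : ∀ a b, |lam a b| ≤ 1)
    (h2 : ∀ a x y, |lam a x + lam x y - lam a y| ≤ 2) (p : ι → Bool) (l : List ι) :
    |wS lam l - wS lam (l.filter p)| ≤ 2 * ((l.filter (fun x => !p x)).length : ℤ) := by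
  induction l with
  | nil => simp
  | cons x l ih =>
    by_cases hx : p x = true
    · have := wS_cons_filter lam h1 h2 p l x
      simpa [hx] using this
    · have hx' : p x = false := by simpa using hx
      have e1 : (x :: l).filter p = l.filter p := by simp [hx']
      have e2 : (x :: l).filter (fun x => !p x) = x :: l.filter (fun x => !p x) := by
        simp [hx']
      rw [e1, e2]
      have h3 : |wS lam (x :: l) - wS lam l| ≤ 2 := by
        cases l with
        | nil => simp [wS]
        | cons y l => simp only [wS]; have := h1 x y; simp only [abs_le] at *; omega
      simp only [List.length_cons, abs_le] at *
      push_cast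
      omega

lemma wS_congr {ι : Type*} (lam mu : ι → ι → ℤ) (l : List ι)
    (h : ∀ a ∈ l, ∀ b ∈ l, lam a b = mu a b) : wS lam l = wS mu l := by
  induction l with
  | nil => rfl
  | cons x l ih =>
    cases l with
    | nil => rfl
    | cons y l =>
      simp only [wS]
      rw [ih (fun a ha b hb => h a (by simp [ha]) b (by simp [hb])), h x (by simp) y (by simp)]

lemma wS_two {ι : Type*} (lam mu : ι → ι → ℤ) (p q : ι) (l₂ : List ι)
    (h2 : ∀ a b, ¬((a = p ∧ b = q) ∨ (a = q ∧ b = p)) → lam a b = mu a b)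
    (hpq : lam p q = mu p q + 2) : ∀ l₁ : List ι, (l₁ ++ p :: q :: l₂).Nodup →
    wS lam (l₁ ++ p :: q :: l₂) = wS mu (l₁ ++ p :: q :: l₂) + 2 := by
  intro l₁
  induction l₁ with
  | nil =>
    intro h
    simp only [List.nil_append, wS, hpq]
    have : wS lam (q :: l₂) = wS mu (q :: l₂) := by
      apply wS_congr
      intro a ha b hb
      apply h2
      simp only [List.nil_append, List.nodup_cons] at h
      rintro (⟨rfl, rfl⟩ | ⟨rfl, rfl⟩)
      · exact h.1 ha
      · exact h.1 hb
    rw [this]; ring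
  | cons x l ih =>
    intro h
    have ih' := ih (by simp only [List.cons_append, List.nodup_cons] at h; exact h.2)
    cases l with
    | nil =>
      simp only [List.nil_append, List.cons_append, wS] at ih' ⊢
      have : lam x p = mu x p := by
        apply h2
        simp at h
        rintro (⟨rfl, rfl⟩ | ⟨rfl, _⟩) <;> simp_all
      rw [this]; omega
    | cons y l =>
      simp only [List.cons_append, wS] at ih' ⊢
      have : lam x y = mu x y := by
        apply h2
        simp at h
        rintro (⟨rfl, rfl⟩ | ⟨rfl, _⟩) <;> simp_all
      rw [this]; omega


structure Cfg (E ι ε : Type*) [AddCommGroup E] [Module ℝ E] where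
  n : E
  n_ne : n ≠ 0
  σ : E →ₗ[ℝ] E →ₗ[ℝ] ℝ
  σ_self : ∀ a, σ a a = 0
  σ_n : ∀ a, σ n a = 0
  cramer : ∀ a b c, ∃ t : ℝ, σ b c • a + σ c a • b + σ a b • c = t • n
  C : ι → Set E
  C_add : ∀ k p q, p ∈ C k → q ∈ C k → p + q ∈ C k
  C_smul : ∀ k (c : ℝ) p, 0 ≤ c → p ∈ C k → c • p ∈ C k
  vec : ε → E
  neg : ε → ε
  vec_neg : ∀ v, vec (neg v) = - vec v
  gp : ∀ v w, σ (vec v) (vec w) = 0 → w = v ∨ w = neg v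
  ex : ∀ v, ∃ w, σ (vec v) (vec w) ≠ 0
  red : ε → ι
  blue : ε → ι
  red_mem : ∀ v, vec v ∈ C (red v)
  blue_mem : ∀ v, vec v ∈ C (blue v)
  col : ι → Bool
  col_red : ∀ v, col (red v) = true
  col_blue : ∀ v, col (blue v) = false
  uniq : ∀ v w, red v = red w → blue v = blue w → v = w
  inter : ∀ k k' p, k ≠ k' → p ∈ C k → p ∈ C k' → p ≠ 0 →
    ∃ v, ∃ c : ℝ, 0 < c ∧ p = c • vec v ∧ ((red v = k ∧ blue v = k') ∨ (red v = k' ∧ blue v = k))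
  extreme : ∀ k v (c : ℝ) p q, (k = red v ∨ k = blue v) → p ∈ C k → q ∈ C k → p + q = c • vec v →
    ∃ a : ℝ, p = a • vec v
  pointed : ∀ k p q, p ∈ C k → q ∈ C k → p + q = 0 → p = 0
  top : ι
  bot : ι
  top_ne_bot : top ≠ bot
  col_bot : col bot = false
  col_top : col top = true
  no_tb : ∀ v, red v = top → blue v ≠ bot
  top_act : ∀ v, ∃ s : ℝ, vec v + s • n ∈ C top
  bot_act : ∀ v, ∃ s : ℝ, vec v + s • n ∈ C bot
  nonpolar : ∀ k (t : ℝ), k ≠ top → k ≠ bot → t • n ∈ C k → t • n = 0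
  left : ι → ε
  right : ι → ε
  left_mem : ∀ k, k ≠ top → k ≠ bot → vec (left k) ∈ C k
  right_mem : ∀ k, k ≠ top → k ≠ bot → vec (right k) ∈ C k
  lr : ∀ k, k ≠ top → k ≠ bot → 0 < σ (vec (left k)) (vec (right k))
  left_le : ∀ k p, k ≠ top → k ≠ bot → p ∈ C k → 0 ≤ σ (vec (left k)) p
  right_le : ∀ k p, k ≠ top → k ≠ bot → p ∈ C k → 0 ≤ σ p (vec (right k))

namespace Cfg

variable {E ι ε : Type*} [AddCommGroup E] [Module ℝ E] (G : Cfg E ι ε)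

lemma anti (a b : E) : G.σ a b = - G.σ b a := by
  have := G.σ_self (a + b)
  simp only [map_add, LinearMap.add_apply, G.σ_self] at this
  linarith

lemma pluecker (a b c d : E) :
    G.σ b c * G.σ a d + G.σ c a * G.σ b d + G.σ a b * G.σ c d = 0 := by
  obtain ⟨t, ht⟩ := G.cramer a b c
  have := congrArg (fun z => G.σ z d) ht
  simpa [G.σ_n] using this

lemma vec_ne (v : ε) (c t : ℝ) (h : c • G.vec v = t • G.n) : c = 0 := by
  obtain ⟨w, hw⟩ := G.ex v
  have := congrArg (fun z => G.σ z (G.vec w)) h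
  simp [G.σ_n] at this
  tauto

lemma n_vec (v : ε) (c : ℝ) (h : G.n = c • G.vec v) : False := by
  have := G.vec_ne v c 1 (by rw [one_smul]; exact h.symm)
  subst this
  exact G.n_ne (by simpa using h)

lemma vec_ne_zero (v : ε) : G.vec v ≠ 0 := by
  intro h
  have := G.vec_ne v 1 0 (by simp [h])
  norm_num at this

def Above (k k' : ι) : Prop := ∃ p ∈ G.C k, ∃ q ∈ G.C k', p = q + G.n

lemma above_asymm (k k' : ι) (hk : k ≠ k') (h1 : G.Above k k') (h2 : G.Above k' k) : False := by
  obtain ⟨p1, hp1, q1, hq1, e1⟩ := h1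
  obtain ⟨q2, hq2, p2, hp2, e2⟩ := h2
  have e : p1 + p2 = q1 + q2 := by rw [e1, e2]; abel
  by_cases h0 : p1 + p2 = 0
  · have a1 := G.pointed k p1 p2 hp1 hp2 h0
    have a2 := G.pointed k' q1 q2 hq1 hq2 (e ▸ h0)
    rw [a1, a2, zero_add] at e1
    exact G.n_ne e1.symm
  · obtain ⟨v, c, hc, hv, hkk⟩ := G.inter k k' _ hk (G.C_add _ _ _ hp1 hp2)
      (e ▸ G.C_add _ _ _ hq1 hq2) h0
    obtain ⟨a, ha⟩ := G.extreme k v c p1 p2 (by tauto) hp1 hp2 hv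
    obtain ⟨b, hb⟩ := G.extreme k' v c q1 q2 (by tauto) hq1 hq2 (e ▸ hv)
    apply G.n_vec v (a - b)
    rw [sub_smul, ← ha, ← hb, e1]; abel

def act (v : ε) (k : ι) : Prop := ∃ s : ℝ, G.vec v + s • G.n ∈ G.C k

lemma σ_n' (a : E) : G.σ a G.n = 0 := by rw [G.anti, G.σ_n, neg_zero]

lemma act_iff (v : ε) (k : ι) (h1 : k ≠ G.top) (h2 : k ≠ G.bot) :
    G.act v k ↔ 0 ≤ G.σ (G.vec (G.left k)) (G.vec v) ∧ 0 ≤ G.σ (G.vec v) (G.vec (G.right k)) := by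
  constructor
  · rintro ⟨s, hs⟩
    have a1 := G.left_le k _ h1 h2 hs
    have a2 := G.right_le k _ h1 h2 hs
    simp [G.σ_n, G.σ_n'] at a1 a2
    exact ⟨a1, a2⟩
  · rintro ⟨a1, a2⟩
    have hlr := G.lr k h1 h2
    obtain ⟨t, ht⟩ := G.cramer (G.vec (G.left k)) (G.vec v) (G.vec (G.right k))
    set l := G.vec (G.left k)
    set r := G.vec (G.right k)
    set x := G.vec v
    set d := G.σ l r with hd
    refine ⟨t / d, ?_⟩
    have e : x + (t / d) • G.n = d⁻¹ • (G.σ x r • l + G.σ l x • r) := by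
      have e2 : G.σ x r • l + G.σ l x • r = d • x + t • G.n := by
        rw [← ht, G.anti r l, ← hd]; module
      rw [e2, smul_add, smul_smul, smul_smul, inv_mul_cancel₀ hlr.ne', one_smul, div_eq_inv_mul]
    rw [e]
    apply G.C_smul _ _ _ (inv_nonneg.2 hlr.le)
    apply G.C_add
    · exact G.C_smul _ _ _ a2 (G.left_mem k h1 h2)
    · exact G.C_smul _ _ _ a1 (G.right_mem k h1 h2)

lemma tie (v : ε) (s : ℝ) (k k' : ι) (hk : k ≠ k') (h1 : G.vec v + s • G.n ∈ G.C k)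
    (h2 : G.vec v + s • G.n ∈ G.C k') :
    s = 0 ∧ ((G.red v = k ∧ G.blue v = k') ∨ (G.red v = k' ∧ G.blue v = k)) := by
  have h0 : G.vec v + s • G.n ≠ 0 := by
    intro h
    have := G.vec_ne v 1 (-s) (by rw [one_smul, neg_smul]; exact eq_neg_of_add_eq_zero_left h)
    norm_num at this
  obtain ⟨u, c, hc, hu, hkk⟩ := G.inter k k' _ hk h1 h2 h0
  have e : G.σ (G.vec v) (G.vec u) = 0 := by
    have := congrArg (fun z => G.σ (G.vec v) z) hu
    simp [G.σ_n', G.σ_self] at this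
    rcases this with h | h
    · exact absurd h hc.ne'
    · exact h
  rcases G.gp _ _ e with rfl | rfl
  · refine ⟨?_, hkk⟩
    have e3 : (c - 1) • G.vec u = s • G.n := by rw [sub_smul, ← hu, one_smul]; abel
    have := G.vec_ne _ _ _ e3
    rw [this, zero_smul] at e3
    exact (smul_eq_zero.1 e3.symm).resolve_right G.n_ne
  · exfalso
    rw [G.vec_neg] at hu
    have e3 : (-c - 1) • G.vec v = s • G.n := by
      rw [sub_smul, neg_smul, ← smul_neg, ← hu, one_smul]; abel
    have := G.vec_ne _ _ _ e3
    linarith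

lemma mem_cases (v : ε) (k : ι) (h : G.vec v ∈ G.C k) : k = G.red v ∨ k = G.blue v := by
  by_contra hh
  push Not at hh
  have := G.tie v 0 k (G.red v) hh.1 (by simpa using h) (by simpa using G.red_mem v)
  rcases this.2 with h | h
  · exact hh.1 h.1.symm
  · exact hh.2 h.2.symm

lemma red_ne_blue (v : ε) : G.red v ≠ G.blue v := by
  intro h
  have := G.col_red v
  rw [h, G.col_blue] at this
  exact absurd this (by simp)

open Classical in
noncomputable def ht (v : ε) (k : ι) : ℝ := if h : G.act v k then h.choose else 0

lemma ht_spec (v : ε) (k : ι) (h : G.act v k) : G.vec v + G.ht v k • G.n ∈ G.C k := by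
  rw [ht, dif_pos h]; exact h.choose_spec

lemma above_of_lt (v : ε) (k k' : ι) (s s' : ℝ) (h1 : G.vec v + s • G.n ∈ G.C k)
    (h2 : G.vec v + s' • G.n ∈ G.C k') (h : s' < s) : G.Above k k' := by
  have hd : 0 < s - s' := sub_pos.2 h
  refine ⟨(s - s')⁻¹ • (G.vec v + s • G.n), G.C_smul _ _ _ (inv_nonneg.2 hd.le) h1,
    (s - s')⁻¹ • (G.vec v + s' • G.n), G.C_smul _ _ _ (inv_nonneg.2 hd.le) h2, ?_⟩
  have : G.n = (s - s')⁻¹ • ((s - s') • G.n) := by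
    rw [smul_smul, inv_mul_cancel₀ hd.ne', one_smul]
  nth_rw 3 [this]
  rw [← smul_add]
  congr 1
  module

lemma act_red (v : ε) : G.act v (G.red v) := ⟨0, by simpa using G.red_mem v⟩
lemma act_blue (v : ε) : G.act v (G.blue v) := ⟨0, by simpa using G.blue_mem v⟩

open Classical in
lemma word_exists [Fintype ι] (v : ε) : ∃ L : List ι, L.Nodup ∧ (∀ k, k ∈ L ↔ G.act v k) ∧
    L.Pairwise (fun k k' => ¬ G.Above k' k) ∧
    ∃ l₁ l₂ : List ι, L = l₁ ++ G.red v :: G.blue v :: l₂ ∨ L = l₁ ++ G.blue v :: G.red v :: l₂ := by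
  set O : Finset ι := Finset.univ.filter (fun k => G.act v k ∧ k ≠ G.red v ∧ k ≠ G.blue v) with hO
  set r : ι → ι → Prop := fun k k' => G.ht v k' ≤ G.ht v k with hr
  have : Std.Total r := ⟨fun a b => le_total _ _⟩
  have : IsTrans ι r := ⟨fun a b c h1 h2 => le_trans h2 h1⟩
  set up := ((O.filter (fun k => 0 < G.ht v k)).toList).insertionSort r with hup
  set dn := ((O.filter (fun k => G.ht v k < 0)).toList).insertionSort r with hdn
  have mup : ∀ k, k ∈ up ↔ (G.act v k ∧ k ≠ G.red v ∧ k ≠ G.blue v) ∧ 0 < G.ht v k := by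
    intro k; simp [hup, hO, List.mem_insertionSort]
  have mdn : ∀ k, k ∈ dn ↔ (G.act v k ∧ k ≠ G.red v ∧ k ≠ G.blue v) ∧ G.ht v k < 0 := by
    intro k; simp [hdn, hO, List.mem_insertionSort]
  have nup : up.Nodup := (List.perm_insertionSort r _).nodup_iff.2 (Finset.nodup_toList _)
  have ndn : dn.Nodup := (List.perm_insertionSort r _).nodup_iff.2 (Finset.nodup_toList _)
  have sup : up.Pairwise r := List.pairwise_insertionSort r _
  have sdn : dn.Pairwise r := List.pairwise_insertionSort r _
  have h0 : ∀ k, G.act v k → k ≠ G.red v → k ≠ G.blue v → G.ht v k ≠ 0 := by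
    intro k hk h1 h2 h3
    have := G.ht_spec v k hk
    rw [h3, zero_smul, add_zero] at this
    rcases G.mem_cases v k this with h | h <;> contradiction
  have key : ∀ k k', G.act v k → k ≠ G.red v → k ≠ G.blue v → G.act v k' → k ≠ k' → r k k' →
      ¬ G.Above k' k := by
    intro k k' hk h1 h2 hk' hne hrr hab
    rcases lt_or_eq_of_le hrr with h | h
    · exact G.above_asymm _ _ hne (G.above_of_lt v k k' _ _ (G.ht_spec v k hk) (G.ht_spec v k' hk') h) hab
    · have := G.tie v _ k k' hne (G.ht_spec v k hk) (h ▸ G.ht_spec v k' hk')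
      exact h0 k hk h1 h2 this.1
  have ku : ∀ k, k ∈ up → ∀ k', G.vec v ∈ G.C k' → ¬ G.Above k' k := by
    intro k hk k' hk' hab
    rw [mup] at hk
    refine G.above_asymm k k' ?_ (G.above_of_lt v k k' _ 0 (G.ht_spec v k hk.1.1) (by simpa using hk') hk.2) hab
    rintro rfl
    exact (G.mem_cases v _ hk').elim hk.1.2.1 hk.1.2.2
  have kd : ∀ k, k ∈ dn → ∀ k', G.vec v ∈ G.C k' → ¬ G.Above k k' := by
    intro k hk k' hk' hab
    rw [mdn] at hk
    refine G.above_asymm k k' ?_ hab (G.above_of_lt v k' k 0 _ (by simpa using hk') (G.ht_spec v k hk.1.1) hk.2)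
    rintro rfl
    exact (G.mem_cases v _ hk').elim hk.1.2.1 hk.1.2.2
  have kud : ∀ k ∈ up, ∀ k' ∈ dn, ¬ G.Above k' k := by
    intro k hk k' hk'
    rw [mup] at hk
    rw [mdn] at hk'
    apply key k k' hk.1.1 hk.1.2.1 hk.1.2.2 hk'.1.1
    · rintro rfl; linarith [hk.2, hk'.2]
    · exact (hk'.2.trans hk.2).le
  have pup : up.Pairwise (fun k k' => ¬ G.Above k' k) := by
    refine (sup.and nup).imp_of_mem ?_
    intro a b ha hb hab
    rw [mup] at ha hb
    exact key a b ha.1.1 ha.1.2.1 ha.1.2.2 hb.1.1 hab.2 hab.1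
  have pdn : dn.Pairwise (fun k k' => ¬ G.Above k' k) := by
    refine (sdn.and ndn).imp_of_mem ?_
    intro a b ha hb hab
    rw [mdn] at ha hb
    exact key a b ha.1.1 ha.1.2.1 ha.1.2.2 hb.1.1 hab.2 hab.1
  have gen : ∀ P Q : ι, P ≠ Q → G.vec v ∈ G.C P → G.vec v ∈ G.C Q → ¬ G.Above Q P →
      (∀ k, k = P ∨ k = Q ↔ k = G.red v ∨ k = G.blue v) →
      (up ++ P :: Q :: dn).Nodup ∧ (∀ k, k ∈ (up ++ P :: Q :: dn) ↔ G.act v k) ∧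
    (up ++ P :: Q :: dn).Pairwise (fun k k' => ¬ G.Above k' k) := by
    intro P Q hPQ hP hQ hab hiff
    have hPn := (hiff P).1 (Or.inl rfl)
    have hQn := (hiff Q).1 (Or.inr rfl)
    have aP : G.act v P := ⟨0, by simpa using hP⟩
    have aQ : G.act v Q := ⟨0, by simpa using hQ⟩
    refine ⟨?_, ?_, ?_⟩
    · rw [List.nodup_append]
      refine ⟨nup, ?_, ?_⟩
      · simp only [List.nodup_cons, List.mem_cons, mdn]
        refine ⟨?_, ?_, ndn⟩
        · rintro (h | h)
          · exact hPQ h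
          · exact hPn.elim h.1.2.1 h.1.2.2
        · rintro h
          exact hQn.elim h.1.2.1 h.1.2.2
      · intro a ha b hb
        rw [mup] at ha
        simp only [List.mem_cons, mdn] at hb
        rintro rfl
        rcases hb with rfl | rfl | hb
        · exact hPn.elim ha.1.2.1 ha.1.2.2
        · exact hQn.elim ha.1.2.1 ha.1.2.2
        · linarith [ha.2, hb.2]
    · intro k
      simp only [List.mem_append, List.mem_cons, mup, mdn]
      have := hiff k
      constructor
      · rintro (h | rfl | rfl | h)
        · exact h.1.1
        · exact aP
        · exact aQ
        · exact h.1.1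
      · intro hk
        by_cases h1 : k = P ∨ k = Q
        · rcases h1 with h1 | h1
          · exact Or.inr (Or.inl h1)
          · exact Or.inr (Or.inr (Or.inl h1))
        · have h2 : ¬ (k = G.red v ∨ k = G.blue v) := by rwa [← this]
          push Not at h2
          rcases lt_or_gt_of_ne (h0 k hk h2.1 h2.2) with h | h
          · exact Or.inr (Or.inr (Or.inr ⟨⟨hk, h2.1, h2.2⟩, h⟩))
          · exact Or.inl ⟨⟨hk, h2.1, h2.2⟩, h⟩
    · rw [List.pairwise_append]
      refine ⟨pup, ?_, ?_⟩
      · simp only [List.pairwise_cons, List.mem_cons]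
        refine ⟨?_, ?_, pdn⟩
        · rintro a (rfl | ha)
          · exact hab
          · exact kd a ha _ hP
        · intro a ha
          exact kd a ha _ hQ
      · intro a ha b hb
        simp only [List.mem_cons] at hb
        rcases hb with rfl | rfl | hb
        · exact ku a ha _ hP
        · exact ku a ha _ hQ
        · exact kud a ha b hb
  have hne := G.red_ne_blue v
  by_cases hab : G.Above (G.blue v) (G.red v)
  · obtain ⟨g1, g2, g3⟩ := gen (G.blue v) (G.red v) hne.symm (G.blue_mem v) (G.red_mem v)
      (fun h => G.above_asymm _ _ hne h hab) (fun k => or_comm)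
    exact ⟨_, g1, g2, g3, up, dn, Or.inr rfl⟩
  · obtain ⟨g1, g2, g3⟩ := gen (G.red v) (G.blue v) hne (G.red_mem v) (G.blue_mem v)
      hab (fun k => Iff.rfl)
    exact ⟨_, g1, g2, g3, up, dn, Or.inl rfl⟩


lemma next_exists [Fintype ε] (v : ε) : ∃ w, 0 < G.σ (G.vec v) (G.vec w) ∧
    ∀ u, 0 < G.σ (G.vec v) (G.vec u) → u = w ∨ 0 < G.σ (G.vec w) (G.vec u) := by
  classical
  obtain ⟨z, hz⟩ : ∃ z, 0 < G.σ (G.vec v) (G.vec z) := by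
    obtain ⟨w, hw⟩ := G.ex v
    rcases lt_or_gt_of_ne hw with h | h
    · refine ⟨G.neg w, ?_⟩
      rw [G.vec_neg, map_neg]; linarith
    · exact ⟨w, h⟩
  obtain ⟨w, hw, hmin⟩ := Finset.exists_min_image
    (Finset.univ.filter (fun w => 0 < G.σ (G.vec v) (G.vec w)))
    (fun w => G.σ (G.vec z) (G.vec w) / G.σ (G.vec v) (G.vec w)) ⟨z, by simpa using hz⟩
  simp only [Finset.mem_filter, Finset.mem_univ, true_and] at hw hmin
  refine ⟨w, hw, fun u hu => ?_⟩
  have h1 := hmin u hu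
  rw [div_le_div_iff₀ hw hu] at h1
  have h2 := G.pluecker (G.vec v) (G.vec z) (G.vec w) (G.vec u)
  rw [G.anti (G.vec w) (G.vec v)] at h2
  have h3 : 0 ≤ G.σ (G.vec v) (G.vec z) * G.σ (G.vec w) (G.vec u) := by linarith
  have h4 : 0 ≤ G.σ (G.vec w) (G.vec u) := nonneg_of_mul_nonneg_right h3 hz
  rcases h4.lt_or_eq with h | h
  · exact Or.inr h
  · rcases G.gp w u h.symm with h | h
    · exact Or.inl h
    · rw [h, G.vec_neg, map_neg] at hu
      linarith

def IsNext (v w : ε) : Prop := 0 < G.σ (G.vec v) (G.vec w) ∧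
    ∀ u, 0 < G.σ (G.vec v) (G.vec u) → u = w ∨ 0 < G.σ (G.vec w) (G.vec u)

lemma σ_neg_l (v : ε) (a : E) : G.σ (G.vec (G.neg v)) a = - G.σ (G.vec v) a := by
  rw [G.vec_neg, map_neg, LinearMap.neg_apply]

lemma σ_neg_r (v : ε) (a : E) : G.σ a (G.vec (G.neg v)) = - G.σ a (G.vec v) := by
  rw [G.vec_neg, map_neg]

lemma IsNext.prev {v w : ε} (h : G.IsNext v w) (u : ε) (hu : 0 < G.σ (G.vec u) (G.vec w)) :
    u = v ∨ 0 < G.σ (G.vec u) (G.vec v) := by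
  by_contra hh
  push Not at hh
  obtain ⟨h1, h2⟩ := hh
  rcases h2.lt_or_eq with h3 | h3
  · rw [G.anti] at h3
    rcases h.2 u (by linarith) with h4 | h4
    · rw [h4, G.σ_self] at hu; linarith
    · rw [G.anti] at h4; linarith
  · rw [G.anti] at h3
    rcases G.gp v u (by linarith) with h4 | h4
    · exact h1 h4
    · rw [h4, G.σ_neg_l] at hu
      linarith [h.1]

lemma IsNext.inj {v v' w : ε} (h : G.IsNext v w) (h' : G.IsNext v' w) : v = v' := by
  rcases h.prev G v' h'.1 with h1 | h1
  · exact h1.symm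
  · rcases h'.prev G v h.1 with h2 | h2
    · exact h2
    · rw [G.anti] at h2; linarith

lemma gap_mem {v w : ε} (h : G.IsNext v w) (k : ι) :
    (G.act v k ∧ ¬ ((k ≠ G.top ∧ k ≠ G.bot) ∧ G.right k = v)) ↔
    (G.act w k ∧ ¬ ((k ≠ G.top ∧ k ≠ G.bot) ∧ G.left k = w)) := by
  by_cases ht : k = G.top
  · subst ht
    have := G.top_act v
    have := G.top_act w
    simp_all [act]
  by_cases hb : k = G.bot
  · subst hb
    have := G.bot_act v
    have := G.bot_act w
    simp_all [act]
  rw [G.act_iff v k ht hb, G.act_iff w k ht hb]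
  have hlr := G.lr k ht hb
  set l := G.left k
  set r := G.right k
  have hvw := h.1
  constructor
  · rintro ⟨⟨h1, h2⟩, h3⟩
    have hr : r ≠ v := fun e => h3 ⟨⟨ht, hb⟩, e⟩
    have h4 : 0 < G.σ (G.vec v) (G.vec r) := by
      rcases h2.lt_or_eq with h4 | h4
      · exact h4
      · rcases G.gp v r h4.symm with h5 | h5
        · exact absurd h5 hr
        · rw [h5, G.σ_neg_r] at hlr; linarith
    have h5 : 0 ≤ G.σ (G.vec w) (G.vec r) := by
      rcases h.2 r h4 with h5 | h5
      · rw [h5, G.σ_self]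
      · exact h5.le
    have h6 : 0 < G.σ (G.vec l) (G.vec w) := by
      by_cases hl : l = v
      · rw [hl]; exact h.1
      · have h7 : 0 < G.σ (G.vec l) (G.vec v) := by
          rcases h1.lt_or_eq with h7 | h7
          · exact h7
          · rw [G.anti] at h7
            rcases G.gp v l (by linarith) with h8 | h8
            · exact absurd h8 hl
            · rw [h8, G.σ_neg_l] at hlr; linarith
        rcases h.2 (G.neg l) (by rw [G.σ_neg_r, G.anti]; linarith) with h8 | h8
        · rw [← h8, G.σ_neg_l] at h5; linarith
        · rw [G.σ_neg_r, G.anti] at h8; linarith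
    refine ⟨⟨h6.le, h5⟩, ?_⟩
    rintro ⟨-, h7⟩
    rw [h7, G.σ_self] at h6
    exact lt_irrefl _ h6
  · rintro ⟨⟨h1, h2⟩, h3⟩
    have hl : l ≠ w := fun e => h3 ⟨⟨ht, hb⟩, e⟩
    have h4 : 0 < G.σ (G.vec l) (G.vec w) := by
      rcases h1.lt_or_eq with h4 | h4
      · exact h4
      · rw [G.anti] at h4
        rcases G.gp w l (by linarith) with h5 | h5
        · exact absurd h5 hl
        · rw [h5, G.σ_neg_l] at hlr; linarith
    have h5 : 0 ≤ G.σ (G.vec l) (G.vec v) := by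
      rcases h.prev G l h4 with h5 | h5
      · rw [h5, G.σ_self]
      · exact h5.le
    have h6 : 0 < G.σ (G.vec v) (G.vec r) := by
      by_cases hr : r = w
      · rw [hr]; exact h.1
      · have h7 : 0 < G.σ (G.vec w) (G.vec r) := by
          rcases h2.lt_or_eq with h7 | h7
          · exact h7
          · rcases G.gp w r h7.symm with h8 | h8
            · exact absurd h8 hr
            · rw [h8, G.σ_neg_r] at hlr; linarith
        rcases h.prev G (G.neg r) (by rw [G.σ_neg_l, G.anti]; linarith) with h8 | h8
        · rw [← h8, G.σ_neg_r] at h5; linarith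
        · rw [G.σ_neg_l, G.anti] at h8; linarith
    refine ⟨⟨h5, h6.le⟩, ?_⟩
    rintro ⟨-, h7⟩
    rw [h7, G.σ_self] at h6
    exact lt_irrefl _ h6

lemma comparable (v : ε) (k k' : ι) (h : G.act v k) (h' : G.act v k') (hk : k ≠ k')
    (hc : ¬ ((G.red v = k ∧ G.blue v = k') ∨ (G.red v = k' ∧ G.blue v = k))) :
    G.Above k k' ∨ G.Above k' k := by
  have a := G.ht_spec v k h
  have a' := G.ht_spec v k' h'
  rcases lt_trichotomy (G.ht v k) (G.ht v k') with h1 | h1 | h1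
  · exact Or.inr (G.above_of_lt v _ _ _ _ a' a h1)
  · rw [← h1] at a'
    exact absurd (G.tie v _ k k' hk a a').2 hc
  · exact Or.inl (G.above_of_lt v _ _ _ _ a a' h1)

def Con (u : ε) (k k' : ι) : Prop := (G.red u = k ∧ G.blue u = k') ∨ (G.red u = k' ∧ G.blue u = k)

lemma con_uniq (u w : ε) (k k' : ι) (h : G.Con u k k') (h' : G.Con w k k') : u = w := by
  rcases h with ⟨h1, h2⟩ | ⟨h1, h2⟩ <;> rcases h' with ⟨h3, h4⟩ | ⟨h3, h4⟩
  · exact G.uniq _ _ (h1.trans h3.symm) (h2.trans h4.symm)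
  · have a := G.col_red u
    have b := G.col_blue w
    rw [h1, ← h4, b] at a; exact absurd a (by simp)
  · have a := G.col_red u
    have b := G.col_blue w
    rw [h1, ← h4, b] at a; exact absurd a (by simp)
  · exact G.uniq _ _ (h1.trans h3.symm) (h2.trans h4.symm)

lemma con_col (u : ε) (k k' : ι) (h : G.Con u k k') : G.col k ≠ G.col k' := by
  have a := G.col_red u
  have b := G.col_blue u
  rcases h with ⟨h1, h2⟩ | ⟨h1, h2⟩ <;> rw [← h1, ← h2, a, b] <;> simp

open Classical in
noncomputable def lam (f : ε → ℤ) (k k' : ι) : ℤ := if h : ∃ u, G.Con u k k' then f h.choose else 0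

lemma lam_con (f : ε → ℤ) (u : ε) (k k' : ι) (h : G.Con u k k') : G.lam f k k' = f u := by
  have h' : ∃ u, G.Con u k k' := ⟨u, h⟩
  rw [lam, dif_pos h']
  exact congrArg f (G.con_uniq _ _ _ _ h'.choose_spec h)

lemma lam_not (f : ε → ℤ) (k k' : ι) (h : ¬ ∃ u, G.Con u k k') : G.lam f k k' = 0 := by
  rw [lam, dif_neg h]

lemma lam_col (f : ε → ℤ) (k k' : ι) (h : G.col k = G.col k') : G.lam f k k' = 0 :=
  G.lam_not f k k' (fun ⟨u, hu⟩ => G.con_col u k k' hu h)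

lemma lam_le (f : ε → ℤ) (hf : ∀ u, |f u| ≤ 1) (k k' : ι) : |G.lam f k k'| ≤ 1 := by
  by_cases h : ∃ u, G.Con u k k'
  · obtain ⟨u, hu⟩ := h
    rw [G.lam_con f u k k' hu]; exact hf u
  · rw [G.lam_not f k k' h]; simp

lemma lam_tri (f : ε → ℤ) (hf : ∀ u, |f u| ≤ 1) (a x y : ι) :
    |G.lam f a x + G.lam f x y - G.lam f a y| ≤ 2 := by
  have h1 := G.lam_le f hf a x
  have h2 := G.lam_le f hf x y
  have h3 := G.lam_le f hf a y
  have : G.col a = G.col x ∨ G.col x = G.col y ∨ G.col a = G.col y := by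
    cases G.col a <;> cases G.col x <;> cases G.col y <;> simp
  rw [abs_le] at *
  rcases this with h | h | h
  · rw [G.lam_col f _ _ h] at *; omega
  · rw [G.lam_col f _ _ h] at *; omega
  · rw [G.lam_col f _ _ h] at *; omega

open Classical in
noncomputable def aft (v u : ε) : ℤ := if u = v ∨ 0 < G.σ (G.vec u) (G.vec v) then 1 else -1

open Classical in
noncomputable def bef (v u : ε) : ℤ := if 0 < G.σ (G.vec u) (G.vec v) then 1 else -1

lemma aft_le (v u : ε) : |G.aft v u| ≤ 1 := by unfold aft; split_ifs <;> simp
lemma bef_le (v u : ε) : |G.bef v u| ≤ 1 := by unfold bef; split_ifs <;> simp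

lemma not_neg_aux (w : ε) (k : ι) (h1 : k ≠ G.top) (h2 : k ≠ G.bot) (ha : G.act w k)
    (hm : G.vec (G.neg w) ∈ G.C k) : False := by
  obtain ⟨s, hs⟩ := ha
  have h3 := G.C_add _ _ _ hs hm
  rw [G.vec_neg] at h3
  have e : G.vec w + s • G.n + -G.vec w = s • G.n := by abel
  rw [e] at h3
  have h4 := G.nonpolar k s h1 h2 h3
  have h5 := G.pointed k _ _ hm hs (by rw [G.vec_neg, h4]; abel)
  exact G.vec_ne_zero _ h5

lemma label_eq {v w : ε} (h : G.IsNext v w) (u : ε) (k k' : ι) (hc : G.Con u k k')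
    (ha : G.act w k) (ha' : G.act w k') : G.aft v u = G.bef w u := by
  have hu : u ≠ G.neg w := by
    rintro rfl
    have mem : G.vec (G.neg w) ∈ G.C k ∧ G.vec (G.neg w) ∈ G.C k' := by
      have a := G.red_mem (G.neg w)
      have b := G.blue_mem (G.neg w)
      rcases hc with ⟨h1, h2⟩ | ⟨h1, h2⟩
      · rw [h1] at a; rw [h2] at b; exact ⟨a, b⟩
      · rw [h1] at a; rw [h2] at b; exact ⟨b, a⟩
    have c1 := G.col_red (G.neg w)
    have c2 := G.col_blue (G.neg w)
    have c3 := G.col_top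
    have c4 := G.col_bot
    have key : ∀ k, G.act w k → G.vec (G.neg w) ∈ G.C k → k = G.top ∨ k = G.bot := by
      intro k ha hm
      by_contra hh
      push Not at hh
      exact G.not_neg_aux w k hh.1 hh.2 ha hm
    have k1 := key k ha mem.1
    have k2 := key k' ha' mem.2
    have a1 : G.red (G.neg w) = G.top := by
      have : G.red (G.neg w) = G.top ∨ G.red (G.neg w) = G.bot := by
        rcases hc with ⟨h1, h2⟩ | ⟨h1, h2⟩ <;> rw [h1] <;> assumption
      rcases this with h | h
      · exact h
      · rw [h, c4] at c1; exact absurd c1 (by simp)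
    have a2 : G.blue (G.neg w) = G.bot := by
      have : G.blue (G.neg w) = G.top ∨ G.blue (G.neg w) = G.bot := by
        rcases hc with ⟨h1, h2⟩ | ⟨h1, h2⟩ <;> rw [h2] <;> assumption
      rcases this with h | h
      · rw [h, c3] at c2; exact absurd c2 (by simp)
      · exact h
    exact G.no_tb _ a1 a2
  have hiff : (u = v ∨ 0 < G.σ (G.vec u) (G.vec v)) ↔ 0 < G.σ (G.vec u) (G.vec w) := by
    constructor
    · rintro (rfl | h1)
      · exact h.1
      · rcases h.2 (G.neg u) (by rw [G.σ_neg_r, G.anti]; linarith) with h2 | h2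
        · exfalso
          have e : G.σ (G.vec w) (G.vec u) = 0 := by
            rw [← h2, G.σ_neg_l, G.σ_self, neg_zero]
          rcases G.gp w u e with h3 | h3
          · rw [h3, G.anti] at h1; linarith [h.1]
          · exact hu h3
        · rw [G.σ_neg_r, G.anti] at h2; linarith
    · exact h.prev G u
  unfold aft bef
  simp only [hiff]

open Classical in
theorem main (G : Cfg E ι ε) [Fintype ι] [Fintype ε] : Fintype.card ε + 4 ≤ 2 * Fintype.card ι := by
  choose L hnd hmem hpw hadj using fun v => G.word_exists v
  choose nx hnx using fun v => (G.next_exists v : ∃ w, G.IsNext v w)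
  have hinj : Function.Injective nx := by
    intro v v' e
    have h1 := hnx v
    have h2 := hnx v'
    rw [← e] at h2
    exact IsNext.inj G h1 h2
  have hbij : Function.Bijective nx := Finite.injective_iff_bijective.1 hinj
  set pe : ε → ι → Bool := fun v k => decide (¬ ((k ≠ G.top ∧ k ≠ G.bot) ∧ G.right k = v)) with hpe
  set ps : ε → ι → Bool := fun v k => decide (¬ ((k ≠ G.top ∧ k ≠ G.bot) ∧ G.left k = v)) with hps
  have hL : ∀ v, (L v).filter (pe v) = (L (nx v)).filter (ps (nx v)) := by
    intro v
    have m1 : ∀ k, k ∈ (L v).filter (pe v) ↔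
        (G.act v k ∧ ¬ ((k ≠ G.top ∧ k ≠ G.bot) ∧ G.right k = v)) := by
      intro k; rw [List.mem_filter, hmem, hpe, decide_eq_true_iff]
    have m2 : ∀ k, k ∈ (L (nx v)).filter (ps (nx v)) ↔
        (G.act (nx v) k ∧ ¬ ((k ≠ G.top ∧ k ≠ G.bot) ∧ G.left k = nx v)) := by
      intro k; rw [List.mem_filter, hmem, hps, decide_eq_true_iff]
    refine List.Perm.eq_of_pairwise (le := fun k k' => ¬ G.Above k' k) ?_
      ((hpw v).filter _) ((hpw (nx v)).filter _) ?_
    · intro a b ha hb h1 h2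
      by_contra hne
      have ha' := (G.gap_mem (hnx v) a).1 ((m1 a).1 ha)
      have hb' := (m2 b).1 hb
      have ha1 := (m1 a).1 ha
      have hb1 := (G.gap_mem (hnx v) b).2 hb'
      by_cases hc : G.Con v a b
      · have hc' : ¬ G.Con (nx v) a b := by
          intro hc'
          have e := G.con_uniq _ _ _ _ hc hc'
          have := (hnx v).1
          rw [← e, G.σ_self] at this
          exact lt_irrefl _ this
        have := G.comparable (nx v) a b ha'.1 hb'.1 hne hc'
        tauto
      · have := G.comparable v a b ha1.1 hb1.1 hne hc
        tauto
    · rw [List.perm_ext_iff_of_nodup ((hnd v).filter _) ((hnd (nx v)).filter _)]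
      intro k
      rw [m1, m2]
      exact G.gap_mem (hnx v) k
  set SA : ε → ℤ := fun v => wS (G.lam (G.aft v)) ((L v).filter (pe v)) with hSA
  set SB : ε → ℤ := fun v => wS (G.lam (G.bef v)) ((L v).filter (ps v)) with hSB
  have hAB : ∀ v, SA v = SB (nx v) := by
    intro v
    simp only [hSA, hSB]
    rw [hL v]
    apply wS_congr
    intro a ha b hb
    have ha' := (hmem _ _).1 (List.mem_filter.1 ha).1
    have hb' := (hmem _ _).1 (List.mem_filter.1 hb).1
    by_cases h : ∃ u, G.Con u a b
    · obtain ⟨u, hu⟩ := h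
      rw [G.lam_con _ u a b hu, G.lam_con _ u a b hu]
      exact G.label_eq (hnx v) u a b hu ha' hb'
    · rw [G.lam_not _ _ _ h, G.lam_not _ _ _ h]
  have hsum : ∑ v, SA v = ∑ v, SB v := by
    simp only [hAB]
    exact hbij.sum_comp SB
  set NP : Finset ι := Finset.univ.filter (fun k => k ≠ G.top ∧ k ≠ G.bot) with hNP
  have hcount : ∀ (v : ε) (g : ι → ε) , (((L v).filter
      (fun k => !(decide (¬ ((k ≠ G.top ∧ k ≠ G.bot) ∧ g k = v))))).length : ℤ) ≤
      ((NP.filter (fun k => g k = v)).card : ℤ) := by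
    intro v g
    rw [← List.toFinset_card_of_nodup ((hnd v).filter _)]
    norm_cast
    apply Finset.card_le_card
    intro k hk
    simp only [List.mem_toFinset, List.mem_filter] at hk
    simp only [hNP, Finset.mem_filter, Finset.mem_univ, true_and]
    simpa [and_assoc] using hk.2
  have hjump : ∀ v, wS (G.lam (G.aft v)) (L v) = wS (G.lam (G.bef v)) (L v) + 2 := by
    intro v
    have hne := G.red_ne_blue v
    have hval : ∀ a b, G.Con v a b → G.lam (G.aft v) a b = G.lam (G.bef v) a b + 2 := by
      intro a b hc
      rw [G.lam_con _ v a b hc, G.lam_con _ v a b hc]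
      unfold aft bef
      rw [if_pos (Or.inl rfl), if_neg (by rw [G.σ_self]; exact lt_irrefl _)]
      norm_num
    have hval' : ∀ a b, ¬ G.Con v a b → G.lam (G.aft v) a b = G.lam (G.bef v) a b := by
      intro a b hc
      by_cases h : ∃ u, G.Con u a b
      · obtain ⟨u, hu⟩ := h
        rw [G.lam_con _ u a b hu, G.lam_con _ u a b hu]
        have huv : u ≠ v := by rintro rfl; exact hc hu
        unfold aft bef
        simp [huv]
      · rw [G.lam_not _ _ _ h, G.lam_not _ _ _ h]
    obtain ⟨l₁, l₂, h | h⟩ := hadj v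
    · rw [h]
      apply wS_two
      · intro a b hab
        apply hval'
        rintro (⟨rfl, rfl⟩ | ⟨rfl, rfl⟩) <;> simp at hab
      · exact hval _ _ (Or.inl ⟨rfl, rfl⟩)
      · rw [← h]; exact hnd v
    · rw [h]
      apply wS_two
      · intro a b hab
        apply hval'
        rintro (⟨rfl, rfl⟩ | ⟨rfl, rfl⟩) <;> simp at hab
      · exact hval _ _ (Or.inr ⟨rfl, rfl⟩)
      · rw [← h]; exact hnd v
  have hstep : ∀ v, SB v + 2 ≤ SA v + 2 * ((NP.filter (fun k => G.right k = v)).card : ℤ)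
      + 2 * ((NP.filter (fun k => G.left k = v)).card : ℤ) := by
    intro v
    have a1 := wS_filter (G.lam (G.aft v)) (G.lam_le _ (G.aft_le v)) (G.lam_tri _ (G.aft_le v))
      (pe v) (L v)
    have a2 := wS_filter (G.lam (G.bef v)) (G.lam_le _ (G.bef_le v)) (G.lam_tri _ (G.bef_le v))
      (ps v) (L v)
    have c1 := hcount v G.right
    have c2 := hcount v G.left
    have j := hjump v
    rw [abs_le] at a1 a2
    simp only [hSA, hSB]
    simp only [hpe, hps] at a1 a2 ⊢
    omega
  have htot := Finset.sum_le_sum (fun v (_ : v ∈ Finset.univ) => hstep v)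
  simp only [Finset.sum_add_distrib, ← Finset.mul_sum, Finset.sum_const, Finset.card_univ,
    hsum] at htot
  have f1 : ∀ g : ι → ε, ∑ v, ((NP.filter (fun k => g k = v)).card : ℤ) = (NP.card : ℤ) := by
    intro g
    norm_cast
    exact (Finset.card_eq_sum_card_fiberwise (f := g) (t := Finset.univ) (by simp)).symm
  rw [f1, f1] at htot
  have hNPc : NP.card + 2 = Fintype.card ι := by
    have : NP = Finset.univ \ {G.top, G.bot} := by
      ext k; simp [hNP]
    rw [this, Finset.card_sdiff_of_subset (by simp), Finset.card_pair G.top_ne_bot, Finset.card_univ]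
    have : 2 ≤ Fintype.card ι := by
      rw [← Finset.card_pair G.top_ne_bot]; exact Finset.card_le_univ _
    omega
  simp only [nsmul_eq_mul] at htot
  omega

end Cfg


abbrev E3 := EuclideanSpace ℝ (Fin 3)

open Classical in
noncomputable def nb (X : Finset E3) (x : E3) : Finset E3 := X.filter (fun y => dist x y = 1)

noncomputable def cn (X : Finset E3) (x : E3) : Set E3 :=
  {p | ∃ a : E3 → ℝ, (∀ y, 0 ≤ a y) ∧ p = ∑ y ∈ nb X x, a y • (y - x)}

section geom

variable {X : Finset E3}

lemma mem_nb {x y : E3} : y ∈ nb X x ↔ y ∈ X ∧ dist x y = 1 := by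
  classical
  simp [nb]

lemma nb_norm {x y : E3} (h : y ∈ nb X x) : ‖y - x‖ = 1 := by
  rw [← dist_eq_norm, dist_comm]; exact (mem_nb.1 h).2

lemma cn_add {x p q : E3} (hp : p ∈ cn X x) (hq : q ∈ cn X x) : p + q ∈ cn X x := by
  obtain ⟨a, ha, rfl⟩ := hp
  obtain ⟨b, hb, rfl⟩ := hq
  refine ⟨fun y => a y + b y, fun y => add_nonneg (ha y) (hb y), ?_⟩
  simp only [add_smul, Finset.sum_add_distrib]

lemma cn_smul {x p : E3} (c : ℝ) (hc : 0 ≤ c) (hp : p ∈ cn X x) : c • p ∈ cn X x := by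
  obtain ⟨a, ha, rfl⟩ := hp
  refine ⟨fun y => c * a y, fun y => mul_nonneg hc (ha y), ?_⟩
  simp only [mul_smul, Finset.smul_sum]

lemma cn_gen {x y : E3} (h : y ∈ nb X x) : y - x ∈ cn X x := by
  classical
  refine ⟨fun z => if z = y then 1 else 0, fun z => by dsimp only; split_ifs <;> norm_num, ?_⟩
  simp [ite_smul, h]

lemma cn_lin {x p : E3} (hp : p ∈ cn X x) (f : E3 →ₗ[ℝ] ℝ) (h : ∀ y ∈ nb X x, 0 ≤ f (y - x)) :
    0 ≤ f p := by
  obtain ⟨a, ha, rfl⟩ := hp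
  rw [map_sum]
  apply Finset.sum_nonneg
  intro y hy
  rw [map_smul]
  exact mul_nonneg (ha y) (h y hy)

lemma cn_inner {x p : E3} (hp : p ∈ cn X x) (c : E3) (B : ℝ) (hB : 0 ≤ B)
    (h : ∀ y ∈ nb X x, B ≤ inner ℝ (y - x) c) : ‖p‖ * B ≤ inner ℝ p c := by
  obtain ⟨a, ha, rfl⟩ := hp
  have h1 : ‖∑ y ∈ nb X x, a y • (y - x)‖ ≤ ∑ y ∈ nb X x, a y := by
    refine (norm_sum_le _ _).trans (Finset.sum_le_sum fun y hy => ?_)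
    rw [norm_smul, nb_norm hy, mul_one, Real.norm_of_nonneg (ha y)]
  refine (mul_le_mul_of_nonneg_right h1 hB).trans ?_
  rw [sum_inner, Finset.sum_mul]
  refine Finset.sum_le_sum fun y hy => ?_
  rw [real_inner_smul_left]
  exact mul_le_mul_of_nonneg_left (h y hy) (ha y)

lemma half_ineq (p c : E3) (hp : ‖p‖ = 1) (h : ‖p - c‖ ≤ 1) : ‖c‖ ^ 2 / 2 ≤ inner ℝ p c := by
  have h1 := norm_sub_sq_real p c
  have h2 : ‖p - c‖ ^ 2 ≤ 1 := by nlinarith [norm_nonneg (p - c)]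
  rw [hp] at h1
  linarith

lemma nb_half (hd : ∀ x ∈ X, ∀ y ∈ X, dist x y ≤ 1) {x x' y : E3} (hx' : x' ∈ X)
    (hy : y ∈ nb X x) : ‖x' - x‖ ^ 2 / 2 ≤ inner ℝ (y - x) (x' - x) := by
  apply half_ineq _ _ (nb_norm hy)
  have : y - x - (x' - x) = y - x' := by abel
  rw [this, ← dist_eq_norm]
  exact hd _ (mem_nb.1 hy).1 _ hx'

lemma cn_disj (hd : ∀ x ∈ X, ∀ y ∈ X, dist x y ≤ 1) {x x' p : E3} (hx : x ∈ X) (hx' : x' ∈ X)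
    (hne : x ≠ x') (h1 : p ∈ cn X x) (h2 : p ∈ cn X x') : p = 0 := by
  have a1 := cn_inner h1 (x' - x) (‖x' - x‖ ^ 2 / 2) (by positivity) (fun y hy => nb_half hd hx' hy)
  have a2 := cn_inner h2 (x - x') (‖x - x'‖ ^ 2 / 2) (by positivity) (fun y hy => nb_half hd hx hy)
  rw [norm_sub_rev x x', ← neg_sub x' x, inner_neg_right] at a2
  have h3 : 0 < ‖x' - x‖ := norm_pos_iff.2 (sub_ne_zero.2 hne.symm)
  have h4 : ‖p‖ * ‖x' - x‖ ^ 2 ≤ 0 := by linarith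
  by_contra h
  have := norm_pos_iff.2 h
  have : 0 < ‖p‖ * ‖x' - x‖ ^ 2 := by positivity
  linarith

lemma cn_pointed (hd : ∀ x ∈ X, ∀ y ∈ X, dist x y ≤ 1) {x p q : E3}
    (h1 : p ∈ cn X x) (h2 : q ∈ cn X x) (h : p + q = 0) : p = 0 := by
  rcases (nb X x).eq_empty_or_nonempty with he | ⟨y, hy⟩
  · obtain ⟨a, -, rfl⟩ := h1
    simp [he]
  · have a1 := cn_inner h1 (y - x) (‖y - x‖ ^ 2 / 2) (by positivity)
      (fun z hz => nb_half hd (mem_nb.1 hy).1 hz)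
    have a2 := cn_inner h2 (y - x) (‖y - x‖ ^ 2 / 2) (by positivity)
      (fun z hz => nb_half hd (mem_nb.1 hy).1 hz)
    have a3 : inner ℝ p (y - x) + inner ℝ q (y - x) = 0 := by
      rw [← inner_add_left, h, inner_zero_left]
    rw [nb_norm hy] at a1 a2
    have := norm_nonneg p
    have := norm_nonneg q
    exact norm_eq_zero.1 (by linarith)

lemma eq_of_inner (p u : E3) (hu : ‖u‖ = 1) (h : ‖p‖ ≤ inner ℝ p u) : p = ‖p‖ • u := by
  have h1 := norm_sub_sq_real p (‖p‖ • u)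
  rw [real_inner_smul_right, norm_smul, hu, norm_norm, mul_one] at h1
  have h2 : ‖p - ‖p‖ • u‖ ^ 2 ≤ 0 := by nlinarith [norm_nonneg p]
  have h3 : ‖p - ‖p‖ • u‖ = 0 := by
    have := sq_nonneg ‖p - ‖p‖ • u‖
    exact pow_eq_zero_iff (two_ne_zero) |>.1 (le_antisymm h2 this)
  exact sub_eq_zero.1 (norm_eq_zero.1 h3)

lemma cn_cross (hd : ∀ x ∈ X, ∀ y ∈ X, dist x y ≤ 1) {x y p : E3} (hx : x ∈ X) (hy : y ∈ X)
    (h1 : p ∈ cn X x) (h2 : -p ∈ cn X y) (hp : p ≠ 0) :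
    dist x y = 1 ∧ p = ‖p‖ • (y - x) := by
  obtain ⟨c, hc⟩ : ∃ c, c = y - x := ⟨_, rfl⟩
  rw [← hc]
  have hp0 : 0 < ‖p‖ := norm_pos_iff.2 hp
  have hc1 : ‖c‖ ≤ 1 := by rw [hc, ← dist_eq_norm]; exact hd _ hy _ hx
  have hpc : inner ℝ p c ≤ ‖p‖ * ‖c‖ := real_inner_le_norm p c
  have s1 : ∀ z' ∈ nb X y, ‖p‖ * (1 + ‖c‖ ^ 2) - 2 * inner ℝ p c ≤
      inner ℝ (z' - y) (-((2 * ‖p‖) • c - (2 : ℝ) • p)) := by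
    intro z' hz'
    obtain ⟨q, hq⟩ : ∃ q, q = y - z' := ⟨_, rfl⟩
    have hq1 : ‖q‖ = 1 := by rw [hq, norm_sub_rev]; exact nb_norm hz'
    have hB : ‖c - q‖ ^ 2 = 1 + ‖c‖ ^ 2 - 2 * inner ℝ q c := by
      rw [norm_sub_sq_real, hq1, real_inner_comm]; ring
    have t := cn_inner h1 ((2 : ℝ) • (c - q)) (‖c - q‖ ^ 2) (by positivity) (by
      intro z hz
      have hz1 := nb_norm hz
      have e : z - x - (c - q) = z - z' := by rw [hc, hq]; abel
      have h3 : ‖z - x - (c - q)‖ ≤ 1 := by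
        rw [e, ← dist_eq_norm]; exact hd _ (mem_nb.1 hz).1 _ (mem_nb.1 hz').1
      have := half_ineq _ _ hz1 h3
      rw [real_inner_smul_right]; linarith)
    rw [hB, real_inner_smul_right, inner_sub_right] at t
    have e2 : z' - y = -q := by rw [hq]; abel
    rw [e2, inner_neg_neg, inner_sub_right, real_inner_smul_right, real_inner_smul_right,
      real_inner_comm p q]
    linarith
  have t := cn_inner h2 _ _ (by nlinarith [sq_nonneg (1 - ‖c‖)]) s1
  rw [inner_neg_neg, norm_neg, inner_sub_right, real_inner_smul_right, real_inner_smul_right,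
    real_inner_self_eq_norm_sq] at t
  have t2 : ‖p‖ * (3 + ‖c‖ ^ 2) ≤ 4 * inner ℝ p c := by
    by_contra hh
    push Not at hh
    have := mul_lt_mul_of_pos_left hh hp0
    nlinarith
  have t3 : ‖c‖ = 1 := by
    have h4 : ‖p‖ * ((1 - ‖c‖) * (3 - ‖c‖)) ≤ 0 := by nlinarith
    have h5 : (1 - ‖c‖) * (3 - ‖c‖) ≤ 0 := by
      by_contra hh
      push Not at hh
      have := mul_pos hp0 hh
      linarith
    nlinarith
  refine ⟨?_, eq_of_inner p c t3 ?_⟩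
  · rw [dist_comm, dist_eq_norm, ← hc]; exact t3
  · rw [t3] at t2; linarith

lemma cn_extreme (hd : ∀ x ∈ X, ∀ y ∈ X, dist x y ≤ 1) {x y z p q : E3} {c : ℝ}
    (hy : y ∈ nb X x)
    (hz : z ∈ nb X y) (hzx : z ≠ x) (hp : p ∈ cn X x) (hq : q ∈ cn X x)
    (h : p + q = c • (y - x)) : ∃ a : ℝ, p = a • (y - x) := by
  set u := y - x with hu
  set w := y - z with hw
  have hu1 : ‖u‖ = 1 := nb_norm hy
  have hw1 : ‖w‖ = 1 := by rw [hw, norm_sub_rev]; exact nb_norm hz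
  have huw : u ≠ w := by
    intro e
    apply hzx
    have : x = z := by
      have := sub_right_inj.1 (hu ▸ hw ▸ e : y - x = y - z)
      exact this
    exact this.symm
  have hB : 0 < 1 - inner ℝ u w := by
    have := norm_sub_sq_real u w
    have h2 : 0 < ‖u - w‖ := norm_pos_iff.2 (sub_ne_zero.2 huw)
    rw [hu1, hw1] at this
    nlinarith
  have gen : ∀ y' ∈ nb X x, 1 - inner ℝ u w ≤ inner ℝ (y' - x) (u - w) := by
    intro y' hy'
    have e : y' - x - (u - w) = y' - z := by rw [hu, hw]; abel
    have h3 : ‖y' - x - (u - w)‖ ≤ 1 := by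
      rw [e, ← dist_eq_norm]; exact hd _ (mem_nb.1 hy').1 _ (mem_nb.1 hz).1
    have h4 := half_ineq _ _ (nb_norm hy') h3
    rw [norm_sub_sq_real, hu1, hw1] at h4
    linarith
  have a1 := cn_inner hp _ _ hB.le gen
  have a2 := cn_inner hq _ _ hB.le gen
  have a3 : inner ℝ p (u - w) + inner ℝ q (u - w) = c * (1 - inner ℝ u w) := by
    rw [← inner_add_left, h, real_inner_smul_left, inner_sub_right, real_inner_self_eq_norm_sq, hu1]
    ring
  have a4 : ‖p‖ + ‖q‖ ≤ c := by
    by_contra hh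
    push Not at hh
    have := mul_lt_mul_of_pos_right hh hB
    linarith
  have a5 : inner ℝ p u + inner ℝ q u = c := by
    rw [← inner_add_left, h, real_inner_smul_left, real_inner_self_eq_norm_sq, hu1]; ring
  have a6 : inner ℝ q u ≤ ‖q‖ := by
    have := real_inner_le_norm q u
    rwa [hu1, mul_one] at this
  exact ⟨‖p‖, eq_of_inner p u hu1 (by linarith)⟩

end geom


def D3 (n a b : E3) : ℝ :=
  n 0 * (a 1 * b 2 - a 2 * b 1) + n 1 * (a 2 * b 0 - a 0 * b 2) + n 2 * (a 0 * b 1 - a 1 * b 0)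

noncomputable def S3 (n : E3) : E3 →ₗ[ℝ] E3 →ₗ[ℝ] ℝ :=
  LinearMap.mk₂ ℝ (D3 n)
    (by intros; simp only [D3, PiLp.add_apply]; ring)
    (by intros; simp only [D3, PiLp.smul_apply, smul_eq_mul]; ring)
    (by intros; simp only [D3, PiLp.add_apply]; ring)
    (by intros; simp only [D3, PiLp.smul_apply, smul_eq_mul]; ring)

lemma S3_apply (n a b : E3) : S3 n a b = D3 n a b := rfl

lemma D3_cramer (n a b c : E3) :
    D3 n b c • a + D3 n c a • b + D3 n a b • c = D3 a b c • n := by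
  ext i
  fin_cases i <;> simp [D3] <;> ring

lemma D3_par (u w : E3) (hu : ‖u‖ = 1) (hw : ‖w‖ = 1) (h : ∀ a, D3 a u w = 0) :
    w = u ∨ w = -u := by
  have h0 := h (EuclideanSpace.single 0 1)
  have h1 := h (EuclideanSpace.single 1 1)
  have h2 := h (EuclideanSpace.single 2 1)
  simp [D3] at h0 h1 h2
  have iu : u 0 ^ 2 + u 1 ^ 2 + u 2 ^ 2 = 1 := by
    have := EuclideanSpace.norm_sq_eq u
    rw [hu, Fin.sum_univ_three] at this
    simpa using this.symm
  have iw : w 0 ^ 2 + w 1 ^ 2 + w 2 ^ 2 = 1 := by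
    have := EuclideanSpace.norm_sq_eq w
    rw [hw, Fin.sum_univ_three] at this
    simpa using this.symm
  set d := u 0 * w 0 + u 1 * w 1 + u 2 * w 2 with hd
  have hd2 : d ^ 2 = 1 := by
    have : d ^ 2 = (u 0 ^ 2 + u 1 ^ 2 + u 2 ^ 2) * (w 0 ^ 2 + w 1 ^ 2 + w 2 ^ 2)
      - (u 1 * w 2 - u 2 * w 1) ^ 2 - (u 2 * w 0 - u 0 * w 2) ^ 2 - (u 0 * w 1 - u 1 * w 0) ^ 2 := by
      rw [hd]; ring
    rw [this, iu, iw, h0, h1, h2]; norm_num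
  have e0 : w 0 = d * u 0 := by
    rw [hd]; linear_combination (-(w 0)) * iu - u 1 * h2 + u 2 * h1
  have e1 : w 1 = d * u 1 := by
    rw [hd]; linear_combination (-(w 1)) * iu - u 2 * h0 + u 0 * h2
  have e2 : w 2 = d * u 2 := by
    rw [hd]; linear_combination (-(w 2)) * iu - u 0 * h1 + u 1 * h0
  have hd3 : d = 1 ∨ d = -1 := by
    have : (d - 1) * (d + 1) = 0 := by linear_combination hd2
    rcases mul_eq_zero.1 this with h | h
    · left; linarith
    · right; linarith
  rcases hd3 with h | h
  · left; ext i; fin_cases i <;> simp [e0, e1, e2, h]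
  · right; ext i; fin_cases i <;> simp [e0, e1, e2, h]

lemma quad_finite (a b c : ℝ) (h : ¬ (a = 0 ∧ b = 0 ∧ c = 0)) :
    {t : ℝ | a + t * b + t ^ 2 * c = 0}.Finite := by
  have hp : (Polynomial.C a + Polynomial.X * Polynomial.C b + Polynomial.X ^ 2 * Polynomial.C c : Polynomial ℝ) ≠ 0 := by
    intro h0
    apply h
    refine ⟨?_, ?_, ?_⟩
    · simpa using congrArg (fun p => Polynomial.eval 0 p) h0
    · have h1 := congrArg (fun p => Polynomial.eval 1 p) h0
      have h2 := congrArg (fun p => Polynomial.eval (-1) p) h0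
      simp at h1 h2
      linarith
    · have h1 := congrArg (fun p => Polynomial.eval 1 p) h0
      have h2 := congrArg (fun p => Polynomial.eval (-1) p) h0
      have h3 := congrArg (fun p => Polynomial.eval 0 p) h0
      simp at h1 h2 h3
      linarith
  refine (Polynomial.finite_setOfPred_isRoot hp).subset ?_
  intro t ht
  simp only [Set.mem_ofPred_eq, Polynomial.IsRoot.def] at ht ⊢
  simp
  linarith

/-- generic axis in the cone -/
lemma generic_axis {κ : Type*} [Finite κ] (u w : κ → E3) (p : Fin 3 → E3)
    (hp : LinearIndependent ℝ p) :
    ∃ t : ℝ, 0 < t ∧ ∀ i, D3 (p 0 + t • p 1 + t ^ 2 • p 2) (u i) (w i) = 0 →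
      ∀ a, D3 a (u i) (w i) = 0 := by
  have hspan : ⊤ ≤ Submodule.span ℝ (Set.range p) := by
    rw [hp.span_eq_top_of_card_eq_finrank (by simp)]
  have lin : ∀ t : ℝ, ∀ i, D3 (p 0 + t • p 1 + t ^ 2 • p 2) (u i) (w i)
      = D3 (p 0) (u i) (w i) + t * D3 (p 1) (u i) (w i) + t ^ 2 * D3 (p 2) (u i) (w i) := by
    intro t i
    simp only [D3, PiLp.add_apply, PiLp.smul_apply, smul_eq_mul]; ring
  have hall : ∀ i, (D3 (p 0) (u i) (w i) = 0 ∧ D3 (p 1) (u i) (w i) = 0 ∧ D3 (p 2) (u i) (w i) = 0)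
      → ∀ a, D3 a (u i) (w i) = 0 := by
    intro i h a
    have ha : a ∈ Submodule.span ℝ (Set.range p) := hspan trivial
    induction ha using Submodule.span_induction with
    | mem x hx =>
      obtain ⟨j, rfl⟩ := hx
      fin_cases j
      · exact h.1
      · exact h.2.1
      · exact h.2.2
    | zero => simp [D3]
    | add x y _ _ hx hy =>
      have : D3 (x + y) (u i) (w i) = D3 x (u i) (w i) + D3 y (u i) (w i) := by
        simp only [D3, PiLp.add_apply]; ring
      rw [this, hx, hy, add_zero]
    | smul c x _ hx =>
      have : D3 (c • x) (u i) (w i) = c * D3 x (u i) (w i) := by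
        simp only [D3, PiLp.smul_apply, smul_eq_mul]; ring
      rw [this, hx, mul_zero]
  have hfin : (⋃ i : {i : κ // ¬ (D3 (p 0) (u i) (w i) = 0 ∧ D3 (p 1) (u i) (w i) = 0 ∧ D3 (p 2) (u i) (w i) = 0)},
      {t : ℝ | D3 (p 0) (u i) (w i) + t * D3 (p 1) (u i) (w i) + t ^ 2 * D3 (p 2) (u i) (w i) = 0}).Finite :=
    Set.finite_iUnion (fun i => quad_finite _ _ _ i.2)
  obtain ⟨t, ht, hnot⟩ := (Set.Ioi_infinite (0 : ℝ)).exists_notMem_finite hfin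
  refine ⟨t, ht, fun i hi => ?_⟩
  apply hall i
  by_contra hh
  apply hnot
  rw [Set.mem_iUnion]
  refine ⟨⟨i, hh⟩, ?_⟩
  rw [lin] at hi
  exact hi

lemma exists_max_rel {κ : Type*} (τ : κ → κ → ℝ) (ha : ∀ a b, τ a b = - τ b a)
    (S : Finset κ) (hS : S.Nonempty)
    (H : ∀ a ∈ S, ∀ b ∈ S, ∀ c ∈ S, 0 < τ a b → 0 < τ b c → 0 ≤ τ c a → False) :
    ∃ r ∈ S, ∀ w ∈ S, 0 ≤ τ w r := by
  induction hS using Finset.Nonempty.cons_induction with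
  | singleton a => exact ⟨a, by simp, by intro w hw; rw [Finset.mem_singleton.1 hw]; linarith [ha a a]⟩
  | cons a S haS hS ih =>
    obtain ⟨r, hr, hw⟩ := ih (fun x hx y hy z hz => H x (by simp [hx]) y (by simp [hy]) z (by simp [hz]))
    by_cases h : 0 ≤ τ a r
    · refine ⟨r, by simp [hr], fun w hws => ?_⟩
      rcases Finset.mem_cons.1 hws with rfl | hws
      · exact h
      · exact hw w hws
    · push Not at h
      refine ⟨a, by simp, fun w hws => ?_⟩
      rcases Finset.mem_cons.1 hws with rfl | hws
      · linarith [ha w w]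
      · by_contra hh
        push Not at hh
        exact H r (by simp [hr]) a (by simp) w (by simp [hws]) (by rw [ha]; linarith)
          (by rw [ha]; linarith) (hw w hws)

lemma cn_indep {X : Finset E3} (hd : ∀ x ∈ X, ∀ y ∈ X, dist x y ≤ 1)
    (hdeg : ∀ x ∈ X, 3 ≤ (nb X x).card) {x : E3} (hx : x ∈ X) (y : Fin 3 → E3)
    (hy : ∀ i, y i ∈ nb X x) (hinj : Function.Injective y) :
    LinearIndependent ℝ (fun i => y i - x) := by
  classical
  have T : ∀ i j k : Fin 3, i ≠ j → i ≠ k → ∀ a b c : ℝ, 0 ≤ b → 0 ≤ c →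
      b • (y j - x) + c • (y k - x) = a • (y i - x) → b = 0 ∧ c = 0 := by
    intro i j k hij hik a b c hb hc h
    obtain ⟨z, hz, hzx⟩ : ∃ z ∈ nb X (y i), z ≠ x := by
      have := hdeg (y i) (mem_nb.1 (hy i)).1
      exact Finset.exists_mem_ne (by omega) x
    have par : ∀ l : Fin 3, i ≠ l → ∀ b a' : ℝ, b • (y l - x) = a' • (y i - x) → b = 0 := by
      intro l hl b a' he
      by_contra hb
      have e : y l - x = (b⁻¹ * a') • (y i - x) := by
        rw [mul_smul, ← he, smul_smul, inv_mul_cancel₀ hb, one_smul]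
      have n1 := nb_norm (hy l)
      have n2 := nb_norm (hy i)
      have hi := nb_half hd (mem_nb.1 (hy i)).1 (hy l)
      rw [n2, e, real_inner_smul_left, real_inner_self_eq_norm_sq, n2] at hi
      rw [e, norm_smul, n2, mul_one, Real.norm_eq_abs, abs_of_pos (by linarith)] at n1
      rw [n1, one_smul] at e
      exact hl (hinj (sub_left_injective e)).symm
    have e1 := cn_extreme hd (hy i) hz hzx (cn_smul b hb (cn_gen (hy j)))
      (cn_smul c hc (cn_gen (hy k))) h
    have e2 := cn_extreme hd (hy i) hz hzx (cn_smul c hc (cn_gen (hy k)))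
      (cn_smul b hb (cn_gen (hy j))) (by rw [add_comm]; exact h)
    obtain ⟨a1, h1⟩ := e1
    obtain ⟨a2, h2⟩ := e2
    exact ⟨par j hij _ _ h1, par k hik _ _ h2⟩
  have T' : ∀ i j k : Fin 3, i ≠ j → i ≠ k → ∀ a b c : ℝ, 0 ≤ b * c →
      a • (y i - x) + b • (y j - x) + c • (y k - x) = 0 → a = 0 ∧ b = 0 ∧ c = 0 := by
    intro i j k hij hik a b c hbc h
    have hbc0 : b = 0 ∧ c = 0 := by
      rcases le_total 0 b with hb | hb
      · rcases le_total 0 c with hc | hc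
        · refine T i j k hij hik (-a) b c hb hc ?_
          rw [neg_smul, eq_neg_iff_add_eq_zero, ← h]; abel
        · rcases eq_or_lt_of_le hb with hb0 | hb0
          · subst hb0
            have := T i j k hij hik a 0 (-c) le_rfl (by linarith) (by
              rw [zero_smul, zero_add, neg_smul, neg_eq_iff_add_eq_zero, ← h]; module)
            exact ⟨rfl, by linarith [this.2]⟩
          · have : c = 0 := by nlinarith
            subst this
            exact T i j k hij hik (-a) b 0 hb le_rfl (by
              rw [neg_smul, eq_neg_iff_add_eq_zero, ← h]; abel)
      · rcases le_total 0 c with hc | hc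
        · rcases eq_or_lt_of_le hc with hc0 | hc0
          · subst hc0
            have := T i j k hij hik a (-b) 0 (by linarith) le_rfl (by
              rw [zero_smul, add_zero, neg_smul, neg_eq_iff_add_eq_zero, ← h]; module)
            exact ⟨by linarith [this.1], rfl⟩
          · have : b = 0 := by nlinarith
            subst this
            exact T i j k hij hik (-a) 0 c le_rfl hc (by
              rw [neg_smul, eq_neg_iff_add_eq_zero, ← h]; abel)
        · have := T i j k hij hik a (-b) (-c) (by linarith) (by linarith) (by
            rw [neg_smul, neg_smul, ← neg_add, neg_eq_iff_add_eq_zero, ← h]; abel)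
          exact ⟨by linarith [this.1], by linarith [this.2]⟩
    obtain ⟨rfl, rfl⟩ := hbc0
    rw [zero_smul, zero_smul, add_zero, add_zero, smul_eq_zero] at h
    refine ⟨h.resolve_right ?_, rfl, rfl⟩
    intro h0
    have := nb_norm (hy i)
    rw [h0, norm_zero] at this
    norm_num at this
  rw [Fintype.linearIndependent_iff]
  intro g hg
  rw [Fin.sum_univ_three] at hg
  have : 0 ≤ g 1 * g 2 ∨ 0 ≤ g 0 * g 2 ∨ 0 ≤ g 0 * g 1 := by
    by_contra hh
    push Not at hh
    obtain ⟨h1, h2, h3⟩ := hh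
    have := mul_pos_of_neg_of_neg h1 h2
    nlinarith [sq_nonneg (g 2)]
  have res : g 0 = 0 ∧ g 1 = 0 ∧ g 2 = 0 := by
    rcases this with h | h | h
    · exact T' 0 1 2 (by decide) (by decide) _ _ _ h hg
    · have := T' 1 0 2 (by decide) (by decide) (g 1) _ _ h (by rw [← hg]; abel)
      tauto
    · have := T' 2 0 1 (by decide) (by decide) (g 2) _ _ h (by rw [← hg]; abel)
      tauto
  intro i
  fin_cases i
  · exact res.1
  · exact res.2.1
  · exact res.2.2


section build

variable {X : Finset E3}

lemma nb_symm {x y : E3} (hx : x ∈ X) (hy : y ∈ nb X x) : x ∈ nb X y :=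
  mem_nb.2 ⟨hx, by rw [dist_comm]; exact (mem_nb.1 hy).2⟩

lemma nb_ne {x y : E3} (hy : y ∈ nb X x) : y - x ≠ 0 := by
  intro h
  have := nb_norm hy
  rw [h, norm_zero] at this
  norm_num at this

lemma evec_eq (hd : ∀ x ∈ X, ∀ y ∈ X, dist x y ≤ 1) {x y x' y' : E3} (hx : x ∈ X) (hx' : x' ∈ X)
    (hy : y ∈ nb X x) (hy' : y' ∈ nb X x') (h : y' - x' = y - x) : x' = x ∧ y' = y := by
  have hxx : x' = x := by
    by_contra hne
    apply nb_ne hy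
    exact cn_disj hd hx' hx hne (h ▸ cn_gen hy') (cn_gen hy)
  subst hxx
  exact ⟨rfl, sub_left_injective h⟩

lemma axis_exists (hd : ∀ x ∈ X, ∀ y ∈ X, dist x y ≤ 1)
    (hdeg : ∀ x ∈ X, 3 ≤ (nb X x).card) {x0 : E3} (hx0 : x0 ∈ X) :
    ∃ n : E3, n ≠ 0 ∧ n ∈ cn X x0 ∧
      (∀ x ∈ X, ∀ x' ∈ X, ∀ y ∈ nb X x, ∀ y' ∈ nb X x', S3 n (y - x) (y' - x') = 0 →
        (x' = x ∧ y' = y) ∨ (x' = y ∧ y' = x)) ∧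
      (∀ u : E3, ∃ s : ℝ, u + s • n ∈ cn X x0) := by
  classical
  obtain ⟨A, hA, hA3⟩ := Finset.exists_subset_card_eq (hdeg x0 hx0)
  let e := A.equivFinOfCardEq hA3
  let y : Fin 3 → E3 := fun i => (e.symm i : E3)
  have hy : ∀ i, y i ∈ nb X x0 := fun i => hA (e.symm i).2
  have hinj : Function.Injective y := fun i j h => e.symm.injective (Subtype.ext h)
  have hind := cn_indep hd hdeg hx0 y hy hinj
  obtain ⟨p, hp⟩ : ∃ p : Fin 3 → E3, p = fun i => y i - x0 := ⟨_, rfl⟩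
  have hpc : ∀ i, p i ∈ cn X x0 := fun i => by rw [hp]; exact cn_gen (hy i)
  rw [← hp] at hind
  obtain ⟨t, ht, hg⟩ := generic_axis (κ := (X × X) × (X × X))
    (fun q => (q.1.2 : E3) - q.1.1) (fun q => (q.2.2 : E3) - q.2.1) p hind
  refine ⟨p 0 + t • p 1 + t ^ 2 • p 2, ?_, ?_, ?_, ?_⟩
  · intro h0
    rw [Fintype.linearIndependent_iff] at hind
    have := hind ![1, t, t ^ 2] (by rw [Fin.sum_univ_three]; simpa using h0) 0
    simp at this
  · exact cn_add (cn_add (hpc 0) (cn_smul t ht.le (hpc 1))) (cn_smul _ (by positivity) (hpc 2))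
  · intro x hx x' hx' z hz z' hz' h
    have h1 := hg ((⟨x, hx⟩, ⟨z, (mem_nb.1 hz).1⟩), (⟨x', hx'⟩, ⟨z', (mem_nb.1 hz').1⟩)) h
    rcases D3_par _ _ (nb_norm hz) (nb_norm hz') h1 with h2 | h2
    · left; exact evec_eq hd hx hx' hz hz' h2
    · right
      have h3 : z' - x' = x - z := by rw [h2]; simp
      exact evec_eq hd (mem_nb.1 hz).1 hx' (nb_symm hx hz) hz' h3
  · intro u
    have hu : u ∈ Submodule.span ℝ (Set.range p) := by
      rw [hind.span_eq_top_of_card_eq_finrank (by simp)]; trivial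
    obtain ⟨g, rfl⟩ := (Submodule.mem_span_range_iff_exists_fun ℝ).1 hu
    have b1 : 0 ≤ |g 1| / t := by positivity
    have b2 : 0 ≤ |g 2| / t ^ 2 := by positivity
    have c1 : |g 1| / t * t = |g 1| := by field_simp
    have c2 : |g 2| / t ^ 2 * t ^ 2 = |g 2| := by field_simp
    have d0 := neg_abs_le (g 0)
    have d1 := neg_abs_le (g 1)
    have d2 := neg_abs_le (g 2)
    have d3 := abs_nonneg (g 0)
    have ht2 : 0 < t ^ 2 := by positivity
    obtain ⟨s, hs⟩ : ∃ s, s = |g 0| + |g 1| / t + |g 2| / t ^ 2 := ⟨_, rfl⟩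
    refine ⟨s, ?_⟩
    have e : ∑ i, g i • p i + s • (p 0 + t • p 1 + t ^ 2 • p 2)
        = (g 0 + s) • p 0 + (g 1 + s * t) • p 1 + (g 2 + s * t ^ 2) • p 2 := by
      rw [Fin.sum_univ_three]; module
    rw [e]
    have k0 : 0 ≤ g 0 + s := by rw [hs]; linarith
    have k1 : 0 ≤ g 1 + s * t := by
      have : |g 1| / t * t ≤ s * t := mul_le_mul_of_nonneg_right (by linarith) ht.le
      linarith
    have k2 : 0 ≤ g 2 + s * t ^ 2 := by
      have : |g 2| / t ^ 2 * t ^ 2 ≤ s * t ^ 2 := mul_le_mul_of_nonneg_right (by linarith) ht2.le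
      linarith
    exact cn_add (cn_add (cn_smul _ k0 (hpc 0)) (cn_smul _ k1 (hpc 1))) (cn_smul _ k2 (hpc 2))

lemma S3_anti (n a b : E3) : S3 n a b = - S3 n b a := by
  simp only [S3_apply, D3]; ring

lemma S3_self (n a : E3) : S3 n a a = 0 := by
  simp only [S3_apply, D3]; ring

lemma S3_n (n a : E3) : S3 n n a = 0 := by
  simp only [S3_apply, D3]; ring

lemma nonpolar_aux (hd : ∀ x ∈ X, ∀ y ∈ X, dist x y ≤ 1)
    (hdeg : ∀ x ∈ X, 3 ≤ (nb X x).card) {x0 n : E3} (hx0 : x0 ∈ X) (hn : n ∈ cn X x0)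
    (hG : ∀ x ∈ X, ∀ y ∈ nb X x, ∀ z ∈ nb X x, S3 n (y - x) (z - x) = 0 → z = y)
    {x : E3} (hx : x ∈ X) (hxx : x ≠ x0) (t : ℝ) (h : t • n ∈ cn X x) : t • n = 0 := by
  rcases le_total 0 t with ht | ht
  · exact cn_disj hd hx hx0 hxx h (cn_smul t ht hn)
  · by_contra h0
    have h1 : -(t • n) ∈ cn X x0 := by
      rw [← neg_smul]; exact cn_smul _ (by linarith) hn
    obtain ⟨h2, h3⟩ := cn_cross hd hx hx0 h h1 h0
    have hy : x0 ∈ nb X x := mem_nb.2 ⟨hx0, h2⟩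
    obtain ⟨z, hz, hzx⟩ := Finset.exists_mem_ne (s := nb X x) (by have := hdeg x hx; omega) x0
    have h4 : S3 n (t • n) (z - x) = 0 := by
      rw [map_smul, LinearMap.smul_apply, S3_n, smul_zero]
    rw [h3, map_smul, LinearMap.smul_apply, smul_eq_zero] at h4
    rcases h4 with h4 | h4
    · exact h0 (norm_eq_zero.1 h4)
    · exact hzx (hG x hx _ hy _ hz h4)

lemma ends_exist (hd : ∀ x ∈ X, ∀ y ∈ X, dist x y ≤ 1)
    (hdeg : ∀ x ∈ X, 3 ≤ (nb X x).card) {x0 n : E3} (hx0 : x0 ∈ X) (hn : n ∈ cn X x0)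
    (hG : ∀ x ∈ X, ∀ y ∈ nb X x, ∀ z ∈ nb X x, S3 n (y - x) (z - x) = 0 → z = y)
    {x : E3} (hx : x ∈ X) (hxx : x ≠ x0) :
    ∃ l ∈ nb X x, ∃ r ∈ nb X x, 0 < S3 n (l - x) (r - x) ∧
      (∀ p ∈ cn X x, 0 ≤ S3 n (l - x) p) ∧ (∀ p ∈ cn X x, 0 ≤ S3 n p (r - x)) := by
  classical
  have hne : (nb X x).Nonempty := Finset.card_pos.1 (by have := hdeg x hx; omega)
  have H : ∀ a ∈ nb X x, ∀ b ∈ nb X x, ∀ c ∈ nb X x, 0 < S3 n (a - x) (b - x) →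
      0 < S3 n (b - x) (c - x) → 0 ≤ S3 n (c - x) (a - x) → False := by
    intro a ha b hb c hc h1 h2 h3
    have cr := D3_cramer n (a - x) (b - x) (c - x)
    rw [← S3_apply, ← S3_apply, ← S3_apply] at cr
    have m1 := cn_smul _ h2.le (cn_gen ha)
    have m2 := cn_smul _ h3 (cn_gen hb)
    have m3 := cn_smul _ h1.le (cn_gen hc)
    have m := cn_add (cn_add m1 m2) m3
    have z := nonpolar_aux hd hdeg hx0 hn hG hx hxx _ (cr ▸ m)
    rw [← cr, add_assoc] at z
    have z1 := cn_pointed hd m1 (cn_add m2 m3) z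
    rw [smul_eq_zero] at z1
    rcases z1 with z1 | z1
    · linarith
    · exact nb_ne ha z1
  obtain ⟨r, hr, hr2⟩ := exists_max_rel (fun a b => S3 n (a - x) (b - x))
    (fun a b => S3_anti _ _ _) (nb X x) hne H
  obtain ⟨l, hl, hl2⟩ := exists_max_rel (fun a b => S3 n (b - x) (a - x))
    (fun a b => S3_anti _ _ _) (nb X x) hne (by
      intro a ha b hb c hc h1 h2 h3
      exact H c hc b hb a ha h2 h1 h3)
  have L : ∀ p ∈ cn X x, 0 ≤ S3 n (l - x) p := fun p hp => cn_lin hp (S3 n (l - x)) hl2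
  have R : ∀ p ∈ cn X x, 0 ≤ S3 n p (r - x) := fun p hp =>
    cn_lin hp ((S3 n).flip (r - x)) hr2
  refine ⟨l, hl, r, hr, ?_, L, R⟩
  refine lt_of_le_of_ne (L _ (cn_gen hr)) ?_
  intro h0
  have hrl : r = l := hG x hx l hl r hr h0.symm
  obtain ⟨z, hz, hzx⟩ := Finset.exists_mem_ne (s := nb X x) (by have := hdeg x hx; omega) l
  apply hzx
  apply hG x hx l hl z hz
  have a1 := L _ (cn_gen hz)
  have a2 := R _ (cn_gen hz)
  rw [hrl, S3_anti] at a2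
  linarith

def sg (b : Bool) : ℝ := if b then 1 else -1

abbrev Ev (X : Finset E3) := {q : X × X // dist (q.1 : E3) q.2 = 1}

noncomputable def evec (v : Ev X) : E3 := (v.1.2 : E3) - v.1.1

lemma ev_nb (v : Ev X) : (v.1.2 : E3) ∈ nb X v.1.1 := mem_nb.2 ⟨v.1.2.2, v.2⟩

lemma ev_nb2 (v : Ev X) : (v.1.1 : E3) ∈ nb X v.1.2 := nb_symm v.1.1.2 (ev_nb v)

lemma sg_cases (b : Bool) (P : E3 → Prop) (p : E3) :
    P (sg b • p) ↔ (b = true ∧ P p) ∨ (b = false ∧ P (-p)) := by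
  cases b <;> simp [sg]

lemma cfg_card (hd : ∀ x ∈ X, ∀ y ∈ X, dist x y ≤ 1)
    (hdeg : ∀ x ∈ X, 3 ≤ (nb X x).card) (hne : X.Nonempty) :
    Fintype.card (Ev X) + 4 ≤ 2 * (2 * X.card) := by
  classical
  obtain ⟨x0, hx0⟩ := hne
  obtain ⟨n, n_ne, hn, hE, hact⟩ := axis_exists hd hdeg hx0
  have hG : ∀ x ∈ X, ∀ y ∈ nb X x, ∀ z ∈ nb X x, S3 n (y - x) (z - x) = 0 → z = y := by
    intro x hx y hy z hz h
    rcases hE x hx x hx y hy z hz h with h | h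
    · exact h.2
    · exfalso
      apply nb_ne hy
      rw [← h.1, sub_self]
  have nz : ∀ x ∈ X, ∀ y, ∃ z ∈ nb X x, z ≠ y := by
    intro x hx y
    exact Finset.exists_mem_ne (s := nb X x) (by have := hdeg x hx; omega) y
  have ends : ∀ k : X × Bool, ∃ l r : Ev X, (k.1 : E3) ≠ x0 →
      sg k.2 • evec l ∈ cn X k.1 ∧ sg k.2 • evec r ∈ cn X k.1 ∧ 0 < S3 n (evec l) (evec r) ∧
      (∀ p, sg k.2 • p ∈ cn X k.1 → 0 ≤ S3 n (evec l) p) ∧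
      (∀ p, sg k.2 • p ∈ cn X k.1 → 0 ≤ S3 n p (evec r)) := by
    rintro ⟨⟨x, hx⟩, b⟩
    by_cases hxx : x = x0
    · obtain ⟨z, hz, -⟩ := nz x hx x
      exact ⟨⟨(⟨x, hx⟩, ⟨z, (mem_nb.1 hz).1⟩), (mem_nb.1 hz).2⟩,
        ⟨(⟨x, hx⟩, ⟨z, (mem_nb.1 hz).1⟩), (mem_nb.1 hz).2⟩, fun h => absurd hxx h⟩
    · obtain ⟨l, hl, r, hr, h1, h2, h3⟩ := ends_exist hd hdeg hx0 hn hG hx hxx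
      cases b
      · refine ⟨⟨(⟨l, (mem_nb.1 hl).1⟩, ⟨x, hx⟩), (mem_nb.1 (nb_symm hx hl)).2⟩,
          ⟨(⟨r, (mem_nb.1 hr).1⟩, ⟨x, hx⟩), (mem_nb.1 (nb_symm hx hr)).2⟩, fun _ => ?_⟩
        simp only [sg, evec, Bool.false_eq_true, if_false, neg_smul, one_smul, neg_sub]
        refine ⟨cn_gen hl, cn_gen hr, ?_, ?_, ?_⟩
        · rw [← neg_sub l x, ← neg_sub r x, map_neg, map_neg, LinearMap.neg_apply, neg_neg]
          exact h1
        · intro p hp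
          rw [← neg_sub l x, map_neg, LinearMap.neg_apply, ← map_neg]
          exact h2 _ hp
        · intro p hp
          have := h3 _ hp
          rw [← neg_sub r x, map_neg]
          rwa [map_neg, LinearMap.neg_apply] at this
      · refine ⟨⟨(⟨x, hx⟩, ⟨l, (mem_nb.1 hl).1⟩), (mem_nb.1 hl).2⟩,
          ⟨(⟨x, hx⟩, ⟨r, (mem_nb.1 hr).1⟩), (mem_nb.1 hr).2⟩, fun _ => ?_⟩
        simp only [sg, evec, if_true, one_smul]
        exact ⟨cn_gen hl, cn_gen hr, h1, h2, h3⟩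
  choose lf rt hlr using ends
  have ktb : ∀ k : X × Bool, k ≠ (⟨x0, hx0⟩, true) → k ≠ (⟨x0, hx0⟩, false) → (k.1 : E3) ≠ x0 := by
    rintro ⟨⟨x, hx⟩, b⟩ h1 h2 h
    simp only at h
    subst h
    cases b <;> simp at h1 h2
  have ext_aux : ∀ k : X × Bool, ∀ v : Ev X, (k = (v.1.1, true) ∨ k = (v.1.2, false)) → ∀ (c : ℝ) p q,
      sg k.2 • p ∈ cn X k.1 → sg k.2 • q ∈ cn X k.1 → p + q = c • evec v →
      ∃ a : ℝ, p = a • evec v := by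
    rintro k v (rfl | rfl) c p q hp hq h
    · simp only [sg, if_true, one_smul] at hp hq
      obtain ⟨z, hz, hzx⟩ := nz v.1.2 v.1.2.2 v.1.1
      exact cn_extreme hd (ev_nb v) hz hzx hp hq h
    · simp only [sg, Bool.false_eq_true, if_false, neg_smul, one_smul] at hp hq
      obtain ⟨z, hz, hzx⟩ := nz v.1.1 v.1.1.2 v.1.2
      obtain ⟨a, ha⟩ := cn_extreme hd (c := c) (ev_nb2 v) hz hzx hp hq (by
        rw [← neg_add, h, evec, ← smul_neg, neg_sub])
      refine ⟨a, ?_⟩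
      rw [← neg_neg p, ha, evec, ← smul_neg, neg_sub]
  have cross_aux : ∀ (x y : X) (p : E3), p ∈ cn X x → -p ∈ cn X y → p ≠ 0 →
      ∃ v : Ev X, ∃ c : ℝ, 0 < c ∧ p = c • evec v ∧ v.1.1 = x ∧ v.1.2 = y := by
    intro x y p h1 h2 h0
    obtain ⟨h3, h4⟩ := cn_cross hd x.2 y.2 h1 h2 h0
    exact ⟨⟨(x, y), h3⟩, ‖p‖, norm_pos_iff.2 h0, h4, rfl, rfl⟩
  let G : Cfg E3 (X × Bool) (Ev X) :=
    { n := n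
      n_ne := n_ne
      σ := S3 n
      σ_self := S3_self n
      σ_n := S3_n n
      cramer := fun a b c => ⟨D3 a b c, D3_cramer n a b c⟩
      C := fun k => {p | sg k.2 • p ∈ cn X k.1}
      C_add := by
        intro k p q hp hq
        show sg k.2 • (p + q) ∈ cn X k.1
        rw [smul_add]; exact cn_add hp hq
      C_smul := by
        intro k c p hc hp
        show sg k.2 • (c • p) ∈ cn X k.1
        rw [smul_comm]; exact cn_smul c hc hp
      vec := evec
      neg := fun v => ⟨(v.1.2, v.1.1), by rw [dist_comm]; exact v.2⟩
      vec_neg := by intro v; simp [evec]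
      gp := by
        intro v w h
        rcases hE _ v.1.1.2 _ w.1.1.2 _ (ev_nb v) _ (ev_nb w) h with h | h
        · left; exact Subtype.ext (Prod.ext (Subtype.ext h.1) (Subtype.ext h.2))
        · right; exact Subtype.ext (Prod.ext (Subtype.ext h.1) (Subtype.ext h.2))
      ex := by
        intro v
        obtain ⟨z, hz, hzx⟩ := nz v.1.1 v.1.1.2 v.1.2
        refine ⟨⟨(v.1.1, ⟨z, (mem_nb.1 hz).1⟩), (mem_nb.1 hz).2⟩, fun h => hzx ?_⟩
        exact hG _ v.1.1.2 _ (ev_nb v) _ hz h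
      red := fun v => (v.1.1, true)
      blue := fun v => (v.1.2, false)
      red_mem := by
        intro v
        show sg true • evec v ∈ cn X v.1.1
        simp only [sg, if_true, one_smul]
        exact cn_gen (ev_nb v)
      blue_mem := by
        intro v
        show sg false • evec v ∈ cn X v.1.2
        simp only [sg, evec, Bool.false_eq_true, if_false, neg_smul, one_smul, neg_sub]
        exact cn_gen (ev_nb2 v)
      col := fun k => k.2
      col_red := fun _ => rfl
      col_blue := fun _ => rfl
      uniq := by
        intro v w h1 h2
        simp only [Prod.mk.injEq, and_true] at h1 h2
        exact Subtype.ext (Prod.ext h1 h2)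
      inter := by
        rintro ⟨x, b⟩ ⟨y, b'⟩ p hk h1 h2 h0
        change sg b • p ∈ cn X x at h1
        change sg b' • p ∈ cn X y at h2
        cases b <;> cases b' <;>
          simp only [sg, Bool.false_eq_true, if_true, if_false, neg_smul, one_smul] at h1 h2
        · exfalso
          have hxy : (x : E3) ≠ y := fun h => hk (by rw [Subtype.ext h])
          exact h0 (neg_eq_zero.1 (cn_disj hd x.2 y.2 hxy h1 h2))
        · obtain ⟨v, c, hc, hp, e1, e2⟩ := cross_aux y x p h2 h1 h0
          exact ⟨v, c, hc, hp, Or.inr ⟨by rw [e1], by rw [e2]⟩⟩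
        · obtain ⟨v, c, hc, hp, e1, e2⟩ := cross_aux x y p h1 h2 h0
          exact ⟨v, c, hc, hp, Or.inl ⟨by rw [e1], by rw [e2]⟩⟩
        · exfalso
          have hxy : (x : E3) ≠ y := fun h => hk (by rw [Subtype.ext h])
          exact h0 (cn_disj hd x.2 y.2 hxy h1 h2)
      extreme := by
        intro k v c p q hk hp hq h
        exact ext_aux k v hk c p q hp hq h
      pointed := by
        intro k p q hp hq h
        have := cn_pointed hd (x := k.1) hp hq (by rw [← smul_add, h, smul_zero])
        rw [smul_eq_zero] at this
        refine this.resolve_left ?_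
        unfold sg
        split_ifs <;> norm_num
      top := (⟨x0, hx0⟩, true)
      bot := (⟨x0, hx0⟩, false)
      top_ne_bot := by simp
      col_bot := rfl
      col_top := rfl
      no_tb := by
        intro v h1 h2
        simp only [Prod.mk.injEq, and_true] at h1 h2
        apply nb_ne (ev_nb v)
        rw [h1, h2, sub_self]
      top_act := by
        intro v
        obtain ⟨s, hs⟩ := hact (evec v)
        refine ⟨s, ?_⟩
        show sg true • _ ∈ cn X x0
        simpa only [sg, if_true, one_smul] using hs
      bot_act := by
        intro v
        obtain ⟨s, hs⟩ := hact (-evec v)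
        refine ⟨-s, ?_⟩
        show sg false • _ ∈ cn X x0
        simp only [sg, Bool.false_eq_true, if_false, neg_smul, one_smul]
        rw [neg_add, neg_neg]
        exact hs
      nonpolar := by
        intro k t h1 h2 h
        change sg k.2 • (t • n) ∈ cn X k.1 at h
        rw [smul_smul] at h
        have := nonpolar_aux hd hdeg hx0 hn hG k.1.2 (ktb k h1 h2) _ h
        rw [← smul_smul, smul_eq_zero] at this
        refine this.resolve_left ?_
        unfold sg
        split_ifs <;> norm_num
      left := lf
      right := rt
      left_mem := fun k h1 h2 => (hlr k (ktb k h1 h2)).1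
      right_mem := fun k h1 h2 => (hlr k (ktb k h1 h2)).2.1
      lr := fun k h1 h2 => (hlr k (ktb k h1 h2)).2.2.1
      left_le := fun k p h1 h2 h => (hlr k (ktb k h1 h2)).2.2.2.1 p h
      right_le := fun k p h1 h2 h => (hlr k (ktb k h1 h2)).2.2.2.2 p h }
  have := G.main
  rw [Fintype.card_prod, Fintype.card_bool, Fintype.card_coe] at this
  convert this using 2
  ring

end build

open Classical in
lemma count_bound (m : ℕ) : ∀ X : Finset E3, X.card = m → X.Nonempty →
    (∀ x ∈ X, ∀ y ∈ X, dist x y ≤ 1) →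
    (X.offDiag.filter fun p => dist p.1 p.2 = 1).card ≤ 2 * (2 * X.card - 2) := by
  induction m with
  | zero =>
    intro X h1 h2
    have := Finset.card_pos.2 h2
    omega
  | succ m ih =>
    intro X h1 h2 hd
    by_cases hdeg : ∀ x ∈ X, 3 ≤ (nb X x).card
    · have h3 := cfg_card hd hdeg h2
      have h4 : (X.offDiag.filter fun p => dist p.1 p.2 = 1).card ≤ Fintype.card (Ev X) := by
        rw [← Fintype.card_coe]
        refine Fintype.card_le_of_injective (fun p => ⟨(⟨p.1.1, ?_⟩, ⟨p.1.2, ?_⟩), ?_⟩) ?_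
        · have := p.2; simp only [Finset.mem_filter, Finset.mem_offDiag] at this; exact this.1.1
        · have := p.2; simp only [Finset.mem_filter, Finset.mem_offDiag] at this; exact this.1.2.1
        · have := p.2; simp only [Finset.mem_filter, Finset.mem_offDiag] at this; exact this.2
        · intro p q h
          simp only [Subtype.mk.injEq, Prod.mk.injEq] at h
          exact Subtype.ext (Prod.ext h.1 h.2)
      omega
    · push Not at hdeg
      obtain ⟨x, hx, hlt⟩ := hdeg
      rcases (X.erase x).eq_empty_or_nonempty with he | he
      · have hs : X = {x} := by
          rw [← Finset.insert_erase hx, he]; simp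
        rw [hs]
        simp
      · have hc := Finset.card_erase_of_mem hx
        have hpos := Finset.card_pos.2 he
        have h3 := ih (X.erase x) (by omega) he (fun a ha b hb =>
          hd a (Finset.mem_of_mem_erase ha) b (Finset.mem_of_mem_erase hb))
        have hsub : (X.offDiag.filter fun p => dist p.1 p.2 = 1) ⊆
            ((X.erase x).offDiag.filter fun p => dist p.1 p.2 = 1) ∪
            ((nb X x).image (fun y => (x, y)) ∪ (nb X x).image (fun y => (y, x))) := by
          rintro ⟨a, b⟩ h
          simp only [Finset.mem_filter, Finset.mem_offDiag] at h
          obtain ⟨⟨ha, hb, hab⟩, hdab⟩ := h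
          simp only [Finset.mem_union, Finset.mem_filter, Finset.mem_offDiag, Finset.mem_erase,
            Finset.mem_image, mem_nb, Prod.mk.injEq]
          by_cases hax : a = x
          · right; left
            exact ⟨b, ⟨hb, hax ▸ hdab⟩, hax.symm, rfl⟩
          · by_cases hbx : b = x
            · right; right
              exact ⟨a, ⟨ha, by rw [dist_comm, ← hbx]; exact hdab⟩, rfl, hbx.symm⟩
            · left
              exact ⟨⟨⟨hax, ha⟩, ⟨hbx, hb⟩, hab⟩, hdab⟩
        have h4 := Finset.card_le_card hsub
        have h5 := Finset.card_union_le ((X.erase x).offDiag.filter fun p => dist p.1 p.2 = 1)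
            ((nb X x).image (fun y => (x, y)) ∪ (nb X x).image (fun y => (y, x)))
        have h6 := Finset.card_union_le ((nb X x).image (fun y => (x, y)))
          ((nb X x).image (fun y => (y, x)))
        have h7 := Finset.card_image_le (s := nb X x) (f := fun y => (x, y))
        have h8 := Finset.card_image_le (s := nb X x) (f := fun y => (y, x))
        omega


open Classical in
/-- **Vázsonyi's conjecture / theorem of Grünbaum, Heppes, Straszewicz.**
If `X ⊂ ℝ³` is a finite set of `m` points of diameter `1`, then the number of unordered
pairs of points of `X` at distance `1` is at most `2m − 2`.  Unordered pairs are counted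
via ordered pairs of distinct points: there are at most `2 * (2m - 2)` such ordered
pairs. -/
theorem vazsonyi_bound
    (X : Finset (EuclideanSpace ℝ (Fin 3)))
    (hdiam_le : ∀ x ∈ X, ∀ y ∈ X, dist x y ≤ 1)
    (hdiam_eq : ∃ x ∈ X, ∃ y ∈ X, dist x y = 1) :
    (X.offDiag.filter fun p => dist p.1 p.2 = 1).card ≤ 2 * (2 * X.card - 2) := by
  obtain ⟨x, hx, _⟩ := hdiam_eq
  exact count_bound X.card X rfl ⟨x, hx⟩ hdiam_le
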